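/- arXiv:2401.01878 — 6 statements merged into one kernel-verified Lean document; each statement's English description precedes it below -/
import Mathlib

section
/- Let G be a profinite group and H a closed subgroup of G. Then the normalizer of H in G equals the intersection, over all open normal subgroups U of G, of the normalizers of the subgroups HU; that is, N_G(H) = ⋂_{U open normal in G} N_G(HU). -/
/-!
If `K` lies between `H` and `H ⊔ U`, then `K ⊔ U = H ⊔ U`. For `U` normal, every element normalizing
`K` therefore normalizes `H ⊔ U`; take `K` to be the intersection of all the `H ⊔ U`. If the groups
`U` form a basis of neighbourhoods of `1`, this `K` is the closure of `H`.
-/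

open scoped Topology

section Group

variable {G : Type*} [Group G]

theorem normalizer_iInf_sup_eq_iInf_normalizer_sup {ι : Sort*} (H : Subgroup G)
    (U : ι → Subgroup G) [∀ i, (U i).Normal] :
    Subgroup.normalizer ((⨅ i, H ⊔ U i : Subgroup G) : Set G) =
      ⨅ i, Subgroup.normalizer ((H ⊔ U i : Subgroup G) : Set G) := by
  refine le_antisymm (le_iInf fun i => ?_) (Subgroup.iInf_normalizer_le_normalizer_iInf _)
  have sup_eq : (⨅ j, H ⊔ U j) ⊔ U i = H ⊔ U i :=
    le_antisymm (sup_le (iInf_le _ i) le_sup_right)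
      (sup_le_sup_right (le_iInf fun _ => le_sup_left) _)
  rw [← sup_eq]
  exact Subgroup.normalizer_le_normalizer_sup_normal

end Group

section TopologicalGroup

variable {G : Type*} [Group G] [TopologicalSpace G] [IsTopologicalGroup G]

theorem topologicalClosure_eq_iInf_sup {ι : Sort*} {p : ι → Prop} {U : ι → Subgroup G}
    (hU : (𝓝 (1 : G)).HasBasis p fun i => (U i : Set G)) (hN : ∀ i, p i → (U i).Normal)
    (H : Subgroup G) :
    H.topologicalClosure = ⨅ (i) (_ : p i), H ⊔ U i := by
  ext x
  rw [← SetLike.mem_coe, Subgroup.topologicalClosure_coe,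
    mem_closure_iff_nhds_basis (hU.nhds_of_one x)]
  simp only [Subgroup.mem_iInf]
  refine forall₂_congr fun i hi => ?_
  have := hN i hi
  rw [sup_comm, Subgroup.mem_sup_of_normal_left]
  constructor
  · rintro ⟨h, hh, (hhx : h / x ∈ U i)⟩
    exact ⟨x / h, by simpa using inv_mem hhx, h, hh, div_mul_cancel x h⟩
  · rintro ⟨u, hu, h, hh, rfl⟩
    exact ⟨h, hh, by simpa using hu⟩

theorem normalizer_eq_iInf_normalizer_sup_general {ι : Sort*} {p : ι → Prop} {U : ι → Subgroup G}
    (hU : (𝓝 (1 : G)).HasBasis p fun i => (U i : Set G)) (hN : ∀ i, p i → (U i).Normal)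
    (H : Subgroup G) :
    Subgroup.normalizer (H.topologicalClosure : Set G) =
      ⨅ (i) (_ : p i), Subgroup.normalizer ((H ⊔ U i : Subgroup G) : Set G) := by
  have (i : {i // p i}) : (U i).Normal := hN i i.2
  rw [topologicalClosure_eq_iInf_sup hU hN, iInf_subtype', iInf_subtype']
  exact normalizer_iInf_sup_eq_iInf_normalizer_sup H fun i : {i // p i} => U i

theorem hasBasis_nhds_one_isOpen_and_normal [CompactSpace G] [TotallyDisconnectedSpace G] :
    (𝓝 (1 : G)).HasBasis (fun U : Subgroup G => IsOpen (U : Set G) ∧ U.Normal)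
      fun U => (U : Set G) := by
  refine (nhds_basis_opens (1 : G)).to_hasBasis (fun V hV => ?_)
    fun U hU => ⟨U, ⟨U.one_mem, hU.1⟩, subset_rfl⟩
  obtain ⟨N, hN⟩ := ProfiniteGrp.exist_openNormalSubgroup_sub_open_nhds_of_one hV.2 hV.1
  exact ⟨N.toSubgroup, ⟨N.isOpen', N.isNormal'⟩, hN⟩

end TopologicalGroup

/-- Let `G` be a profinite group and `H` a closed subgroup of `G`.  Then the
normalizer of `H` in `G` equals the intersection, over all open normal subgroups `U` of `G`,
of the normalizers of the subgroups `HU` (the subgroup generated by `H` and `U`). -/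
theorem normalizer_eq_iInf_normalizer_sup
    {G : Type*} [Group G] [TopologicalSpace G] [IsTopologicalGroup G]
    [CompactSpace G] [T2Space G] [TotallyDisconnectedSpace G]
    (H : Subgroup G) (hH : IsClosed (H : Set G)) :
    Subgroup.normalizer (H : Set G) =
      ⨅ (U : Subgroup G) (_ : IsOpen (U : Set G)) (_ : U.Normal), Subgroup.normalizer ((H ⊔ U : Subgroup G) : Set G) := by
  simpa only [Subgroup.topologicalClosure_coe, hH.closure_eq, iInf_and] using
    normalizer_eq_iInf_normalizer_sup_general hasBasis_nhds_one_isOpen_and_normal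
      (fun _ => And.right) H
end

section
/- Let G be a profinite group and H a closed subgroup of G. For each open normal subgroup U of G, the quotient map G → G/U induces a group homomorphism from the Weyl group W_G(H) = N_G(H)/H to the Weyl group W_{G/U}(HU/U) = N_{G/U}(HU/U)/(HU/U). The resulting homomorphism from W_G(H) to the product ∏_U W_{G/U}(HU/U) over all open normal subgroups U of G is injective, and its image is exactly the inverse limit, i.e., the set of families (w_U)_U that are compatible in the sense that whenever U ≤ V are open normal subgroups of G, the homomorphism W_{G/U}(HU/U) → W_{G/V}(HV/V) induced by the projection G/U → G/V sends w_U to w_V. In other words, W_G(H) ≅ lim_U W_{G/U}(HU/U). -/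
/-- The Weyl group `W_Γ(K) = N_Γ(K)/K` of a subgroup `K` of a group `Γ`. -/
def WeylGroup {Γ : Type*} [Group Γ] (K : Subgroup Γ) : Type _ :=
  Subgroup.normalizer (K : Set Γ) ⧸ K.subgroupOf (Subgroup.normalizer (K : Set Γ))

instance {Γ : Type*} [Group Γ] (K : Subgroup Γ) : Group (WeylGroup K) :=
  inferInstanceAs (Group (Subgroup.normalizer (K : Set Γ) ⧸ K.subgroupOf (Subgroup.normalizer (K : Set Γ))))

/-- A group homomorphism maps the normalizer of `K` into the normalizer of the image of `K`. -/
theorem mem_normalizer_map {Γ Γ' : Type*} [Group Γ] [Group Γ'] (f : Γ →* Γ') {K : Subgroup Γ}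
    {x : Γ} (hx : x ∈ Subgroup.normalizer (K : Set Γ)) : f x ∈ Subgroup.normalizer (Subgroup.map f K : Set Γ') := by
  rw [Subgroup.mem_normalizer_iff] at hx ⊢
  intro y
  constructor
  · rintro ⟨k, hk, rfl⟩
    exact ⟨x * k * x⁻¹, (hx k).mp hk, by simp [map_mul, map_inv]⟩
  · rintro ⟨k, hk, hfk⟩
    refine ⟨x⁻¹ * k * x, ?_, ?_⟩
    · have h : x * (x⁻¹ * k * x) * x⁻¹ = k := by group
      exact (hx (x⁻¹ * k * x)).mpr (by rw [h]; exact hk)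
    · have hy : y = (f x)⁻¹ * f k * f x := by
        rw [hfk]; group
      rw [hy]
      simp [map_mul, map_inv, mul_assoc]

/-- The homomorphism `N_Γ(K) → N_{Γ'}(f(K))` induced by `f : Γ →* Γ'`. -/
def normalizerRestrict {Γ Γ' : Type*} [Group Γ] [Group Γ'] (f : Γ →* Γ') (K : Subgroup Γ) :
    Subgroup.normalizer (K : Set Γ) →* Subgroup.normalizer (Subgroup.map f K : Set Γ') :=
  MonoidHom.codRestrict (f.comp (Subgroup.normalizer (K : Set Γ)).subtype) _
    (fun x => mem_normalizer_map f x.2)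

/-- The homomorphism of Weyl groups `W_Γ(K) → W_{Γ'}(K')` induced by `f : Γ →* Γ'` when
`K'` is the image of `K` under `f`. -/
def weylMap {Γ Γ' : Type*} [Group Γ] [Group Γ'] (f : Γ →* Γ') (K : Subgroup Γ)
    (K' : Subgroup Γ') (hK' : Subgroup.map f K = K') :
    WeylGroup K →* WeylGroup K' := by
  subst hK'
  exact QuotientGroup.map (K.subgroupOf (Subgroup.normalizer (K : Set Γ)))
    ((Subgroup.map f K).subgroupOf (Subgroup.normalizer (Subgroup.map f K : Set Γ')))
    (normalizerRestrict f K)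
    (fun x hx => by
      have hx' : (x : Γ) ∈ K := hx
      show ((normalizerRestrict f K x :
          Subgroup.normalizer (Subgroup.map f K : Set Γ')) : Γ') ∈ Subgroup.map f K
      exact Subgroup.mem_map_of_mem f hx')

/-- Composing the image in `G/U` with the projection `G/U → G/V` gives the image in `G/V`. -/
theorem map_quotientMap_map_mk' {G : Type*} [Group G] (H U V : Subgroup G)
    [U.Normal] [V.Normal] (hUV : U ≤ V) :
    Subgroup.map (QuotientGroup.map U V (MonoidHom.id G) (fun x hx => hUV hx))
        (Subgroup.map (QuotientGroup.mk' U) H)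
      = Subgroup.map (QuotientGroup.mk' V) H := by
  rw [Subgroup.map_map]
  congr 1

/-!
An element of `W_Γ(K)` is a coset of `K` in `Γ`. A compatible family `(w_U)` of Weyl group elements
of the quotients `G/U` thus gives cosets in `G/U` whose preimages in `G` are nonempty, closed and
decreasing with `U`; by compactness some `x ∈ G` lies in all of them. Since `H = ⋂ HU`, the element
`x` normalizes `H` because it normalizes every `HU`, and its class in `W_G(H)` induces the family.
The same identity shows that a class which is trivial in every `W_{G/U}(HU/U)` is trivial.
-/

theorem iInf_comap_normalizer_le_normalizer_iInf_comap {ι : Sort*} {Γ : Type*} {Γ' : ι → Type*}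
    [Group Γ] [∀ i, Group (Γ' i)] (f : ∀ i, Γ →* Γ' i) (K' : ∀ i, Subgroup (Γ' i)) :
    ⨅ i, (Subgroup.normalizer (K' i : Set (Γ' i))).comap (f i) ≤
      Subgroup.normalizer (⨅ i, (K' i).comap (f i) : Subgroup Γ) :=
  (iInf_mono fun i => Subgroup.le_normalizer_comap (f i)).trans
    (Subgroup.iInf_normalizer_le_normalizer_iInf _)

theorem iInf_openNormalSubgroup_sup_eq {G : Type*} [Group G] [TopologicalSpace G]
    [IsTopologicalGroup G] [CompactSpace G] [TotallyDisconnectedSpace G]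
    {H : Subgroup G} (hH : IsClosed (H : Set G)) :
    ⨅ U : OpenNormalSubgroup G, U.toSubgroup ⊔ H = H := by
  refine le_antisymm ?_ (le_iInf fun U => le_sup_right)
  calc ⨅ U : OpenNormalSubgroup G, U.toSubgroup ⊔ H
      ≤ sInf {N : Subgroup G | IsOpen (N : Set G) ∧ H ≤ N} := le_sInf fun N ⟨hN, hHN⟩ => by
        obtain ⟨U, hUN⟩ := ProfiniteGrp.exist_openNormalSubgroup_sub_open_nhds_of_one hN N.one_mem
        exact iInf_le_of_le U (sup_le hUN hHN)
    _ = H := (ProfiniteGrp.closedSubgroup_eq_sInf_open ⟨H, hH⟩).symm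

namespace WeylGroup

section Functoriality

variable {Γ Γ' Γ'' : Type*} [Group Γ] [Group Γ'] [Group Γ'']
  {K : Subgroup Γ} {K' : Subgroup Γ'} {K'' : Subgroup Γ''}

/-- The quotient homomorphism `N_Γ(K) → W_Γ(K)`. -/
def mk (K : Subgroup Γ) : Subgroup.normalizer (K : Set Γ) →* WeylGroup K :=
  QuotientGroup.mk' (K.subgroupOf (Subgroup.normalizer (K : Set Γ)))

theorem mk_surjective (K : Subgroup Γ) : Function.Surjective (mk K) :=
  QuotientGroup.mk'_surjective _

theorem mk_eq_one_iff {x : Subgroup.normalizer (K : Set Γ)} : mk K x = 1 ↔ (x : Γ) ∈ K :=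
  QuotientGroup.eq_one_iff x

theorem weylMap_mk (f : Γ →* Γ') (hf : K.map f = K') (x : Subgroup.normalizer (K : Set Γ)) :
    weylMap f K K' hf (mk K x) = mk K' ⟨f x, hf ▸ mem_normalizer_map f x.2⟩ := by
  subst hf
  rfl

theorem weylMap_weylMap (g : Γ' →* Γ'') (f : Γ →* Γ') (hf : K.map f = K') (hg : K'.map g = K'')
    (hgf : K.map (g.comp f) = K'') (w : WeylGroup K) :
    weylMap g K' K'' hg (weylMap f K K' hf w) = weylMap (g.comp f) K K'' hgf w := by
  obtain ⟨x, rfl⟩ := mk_surjective K w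
  simp only [weylMap_mk, MonoidHom.comp_apply]

/-- An element of `W_Γ(K)` viewed as a coset of `K`: the set of elements of `N_Γ(K)` representing
it, taken as a subset of `Γ` so that it can be pulled back along homomorphisms into `Γ`. -/
def coset (w : WeylGroup K) : Set Γ :=
  {x | ∃ hx : x ∈ Subgroup.normalizer (K : Set Γ), mk K ⟨x, hx⟩ = w}

theorem coset_nonempty (w : WeylGroup K) : w.coset.Nonempty := by
  obtain ⟨x, hx⟩ := mk_surjective K w
  exact ⟨x, x.2, hx⟩

theorem mapsTo_coset_weylMap (f : Γ →* Γ') (hf : K.map f = K') (w : WeylGroup K) :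
    Set.MapsTo f w.coset (weylMap f K K' hf w).coset := by
  rintro x ⟨hx, rfl⟩
  exact ⟨_, (weylMap_mk f hf ⟨x, hx⟩).symm⟩

end Functoriality

section Family

variable {ι : Type*} {Γ : Type*} {Γ' : ι → Type*} [Group Γ] [∀ i, Group (Γ' i)]
  {K : Subgroup Γ} {K' : ∀ i, Subgroup (Γ' i)} {f : ∀ i, Γ →* Γ' i}

theorem injective_pi_weylMap (hf : ∀ i, K.map (f i) = K' i) (hK : ⨅ i, (K' i).comap (f i) = K) :
    Function.Injective fun (w : WeylGroup K) i => weylMap (f i) K (K' i) (hf i) w := by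
  let φ : WeylGroup K →* ∀ i, WeylGroup (K' i) :=
    MonoidHom.pi fun i => weylMap (f i) K (K' i) (hf i)
  refine (injective_iff_map_eq_one φ).mpr fun w hw => ?_
  obtain ⟨x, rfl⟩ := mk_surjective K w
  have hx (i : ι) : f i x ∈ K' i := by
    have hwi : weylMap (f i) K (K' i) (hf i) (mk K x) = 1 := congrFun hw i
    rwa [weylMap_mk, mk_eq_one_iff] at hwi
  exact mk_eq_one_iff.mpr (hK.le (Subgroup.mem_iInf.mpr hx))

theorem exists_forall_weylMap_eq (hf : ∀ i, K.map (f i) = K' i)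
    (hK : ⨅ i, (K' i).comap (f i) = K) {w : ∀ i, WeylGroup (K' i)}
    (hw : (⋂ i, f i ⁻¹' (w i).coset).Nonempty) :
    ∃ w₀ : WeylGroup K, ∀ i, weylMap (f i) K (K' i) (hf i) w₀ = w i := by
  obtain ⟨x, hx⟩ := hw
  choose hxN hxw using Set.mem_iInter.mp hx
  have hxK : x ∈ Subgroup.normalizer (K : Set Γ) :=
    hK ▸ iInf_comap_normalizer_le_normalizer_iInf_comap f K' (Subgroup.mem_iInf.mpr hxN)
  exact ⟨mk K ⟨x, hxK⟩, fun i => (weylMap_mk (f i) (hf i) ⟨x, hxK⟩).trans (hxw i)⟩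

end Family

section OpenNormalSubgroup

variable {G : Type*} [Group G] [TopologicalSpace G] {H : Subgroup G}

/-- The families `(w_U)_U` in `∏_U W_{G/U}(HU/U)` that form the inverse limit: whenever `U ≤ V`, the
map induced by `G/U → G/V` sends `w_U` to `w_V`. -/
def IsCompatible (w : ∀ U : OpenNormalSubgroup G,
    WeylGroup (Subgroup.map (QuotientGroup.mk' U.toSubgroup) H)) : Prop :=
  ∀ (U V : OpenNormalSubgroup G) (hUV : U.toSubgroup ≤ V.toSubgroup),
    weylMap
      (QuotientGroup.map U.toSubgroup V.toSubgroup (MonoidHom.id G) (fun _ hx => hUV hx))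
      (Subgroup.map (QuotientGroup.mk' U.toSubgroup) H)
      (Subgroup.map (QuotientGroup.mk' V.toSubgroup) H)
      (map_quotientMap_map_mk' H U.toSubgroup V.toSubgroup hUV) (w U) = w V

theorem isCompatible_weylMap (w₀ : WeylGroup H) :
    IsCompatible fun U : OpenNormalSubgroup G =>
      weylMap (QuotientGroup.mk' U.toSubgroup) H _ rfl w₀ :=
  fun U _ hUV => weylMap_weylMap _ (QuotientGroup.mk' U.toSubgroup) rfl
    (map_quotientMap_map_mk' H _ _ hUV) rfl w₀

variable {w : ∀ U : OpenNormalSubgroup G,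
  WeylGroup (Subgroup.map (QuotientGroup.mk' U.toSubgroup) H)}

theorem IsCompatible.monotone_preimage_coset (hw : IsCompatible w) :
    Monotone fun U => QuotientGroup.mk' U.toSubgroup ⁻¹' (w U).coset := by
  intro U V hUV x hx
  have hxV := mapsTo_coset_weylMap _ (map_quotientMap_map_mk' H _ _ hUV) (w U) hx
  rwa [hw U V hUV] at hxV

theorem IsCompatible.nonempty_iInter_preimage_coset [SeparatelyContinuousMul G] [CompactSpace G]
    (hw : IsCompatible w) :
    (⋂ U : OpenNormalSubgroup G, QuotientGroup.mk' U.toSubgroup ⁻¹' (w U).coset).Nonempty := by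
  have : Nonempty (OpenNormalSubgroup G) :=
    ⟨{ toOpenSubgroup := ⊤, isNormal' := Subgroup.normal_top }⟩
  have hclosed (U : OpenNormalSubgroup G) :
      IsClosed (QuotientGroup.mk' U.toSubgroup ⁻¹' (w U).coset) :=
    (isClosed_discrete (w U).coset).preimage continuous_quotient_mk'
  exact IsCompact.nonempty_iInter_of_directed_nonempty_isCompact_isClosed _
    hw.monotone_preimage_coset.directed_ge
    (fun U => (w U).coset_nonempty.preimage (QuotientGroup.mk'_surjective U.toSubgroup))
    (fun U => (hclosed U).isCompact) hclosed

end OpenNormalSubgroup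

end WeylGroup

theorem weylGroup_eq_limit_general
    {G : Type*} [Group G] [TopologicalSpace G] [SeparatelyContinuousMul G] [CompactSpace G]
    (H : Subgroup G) (hH : ⨅ U : OpenNormalSubgroup G, U.toSubgroup ⊔ H = H) :
    Function.Injective (fun w : WeylGroup H => fun U : OpenNormalSubgroup G =>
      weylMap (QuotientGroup.mk' U.toSubgroup) H
        (Subgroup.map (QuotientGroup.mk' U.toSubgroup) H) rfl w) ∧
    ∀ w : ∀ U : OpenNormalSubgroup G,
        WeylGroup (Subgroup.map (QuotientGroup.mk' U.toSubgroup) H),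
      (∃ w₀ : WeylGroup H, ∀ U : OpenNormalSubgroup G,
          weylMap (QuotientGroup.mk' U.toSubgroup) H
            (Subgroup.map (QuotientGroup.mk' U.toSubgroup) H) rfl w₀ = w U) ↔
      WeylGroup.IsCompatible w := by
  simp only [← QuotientGroup.comap_map_mk'] at hH
  refine ⟨WeylGroup.injective_pi_weylMap (fun _ => rfl) hH, fun w => ⟨?_, fun hw => ?_⟩⟩
  · rintro ⟨w₀, hw₀⟩
    obtain rfl := funext hw₀
    exact WeylGroup.isCompatible_weylMap w₀
  · exact WeylGroup.exists_forall_weylMap_eq (fun _ => rfl) hH hw.nonempty_iInter_preimage_coset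

/-- For a profinite group `G` and a closed subgroup `H`, the natural map from
the Weyl group `W_G(H)` to the product of the Weyl groups `W_{G/U}(HU/U)` over all open normal
subgroups `U` of `G` is injective, and a family lies in its image precisely when it is
compatible with the maps induced by the projections `G/U → G/V` for `U ≤ V`; that is,
`W_G(H) ≅ lim_U W_{G/U}(HU/U)`. -/
theorem weylGroup_eq_limit
    {G : Type*} [Group G] [TopologicalSpace G] [IsTopologicalGroup G]
    [CompactSpace G] [T2Space G] [TotallyDisconnectedSpace G]
    (H : Subgroup G) (hH : IsClosed (H : Set G)) :
    Function.Injective (fun w : WeylGroup H => fun U : OpenNormalSubgroup G =>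
      weylMap (QuotientGroup.mk' U.toSubgroup) H
        (Subgroup.map (QuotientGroup.mk' U.toSubgroup) H) rfl w) ∧
    ∀ w : ∀ U : OpenNormalSubgroup G,
        WeylGroup (Subgroup.map (QuotientGroup.mk' U.toSubgroup) H),
      (∃ w₀ : WeylGroup H, ∀ U : OpenNormalSubgroup G,
          weylMap (QuotientGroup.mk' U.toSubgroup) H
            (Subgroup.map (QuotientGroup.mk' U.toSubgroup) H) rfl w₀ = w U) ↔
      ∀ (U V : OpenNormalSubgroup G) (hUV : U.toSubgroup ≤ V.toSubgroup),
        weylMap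
          (QuotientGroup.map U.toSubgroup V.toSubgroup (MonoidHom.id G)
            (fun x hx => hUV hx))
          (Subgroup.map (QuotientGroup.mk' U.toSubgroup) H)
          (Subgroup.map (QuotientGroup.mk' V.toSubgroup) H)
          (map_quotientMap_map_mk' H U.toSubgroup V.toSubgroup hUV) (w U) = w V :=
  weylGroup_eq_limit_general H (iInf_openNormalSubgroup_sup_eq hH)
end

section
/- Let H be a closed subgroup of a profinite group G and let p be a prime. For an open normal subgroup U of G write G_U = G/U and H_U = HU/U for the image of H in G_U. Then the following statements are equivalent: (1) O^p(H) = O^p(G); (2) O^p(H_U) = O^p(G_U) for every open normal subgroup U of G; (3) O^p(G) ≤ H; (4) O^p(G_U) ≤ H_U for every open normal subgroup U of G; (5) for every open normal subgroup U of G, the subgroup H_U is p-subnormal in G_U, i.e., there is a finite chain of subgroups H_U = L_k ⊴ L_{k-1} ⊴ ⋯ ⊴ L_1 = G_U in which each L_{i+1} is normal in L_i with quotient L_i/L_{i+1} a finite p-group. -/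
/-- A (closed normal) subgroup `N` of a topological group `G` has pro-`p` quotient if every
open normal subgroup `U` of `G` containing `N` has index a power of `p`
(equivalently, `G/N` is a pro-`p` group). -/
def HasProPQuotient (p : ℕ) {G : Type*} [Group G] [TopologicalSpace G] (N : Subgroup G) : Prop :=
  ∀ U : Subgroup G, IsOpen (U : Set G) → U.Normal → N ≤ U → ∃ k : ℕ, U.index = p ^ k

/-- `O^p(G)`: the intersection of all closed normal subgroups of `G` with pro-`p` quotient. -/
def pResidual (p : ℕ) (G : Type*) [Group G] [TopologicalSpace G] : Subgroup G :=
  sInf {N : Subgroup G | IsClosed (N : Set G) ∧ N.Normal ∧ HasProPQuotient p N}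

/-- `O^p(Q)` for a finite group `Q`: the intersection of all normal subgroups `M` of `Q`
such that `Q/M` is a `p`-group (i.e. `M` has index a power of `p`). -/
def pResidualFinite (p : ℕ) (Q : Type*) [Group Q] : Subgroup Q :=
  sInf {M : Subgroup Q | M.Normal ∧ ∃ k : ℕ, M.index = p ^ k}

/-- A subgroup `K` of a group `Q` is `p`-subnormal if there is a finite chain
`K = L_k ⊴ L_{k-1} ⊴ ⋯ ⊴ L_1 = Q` in which each term is normal in the next one with
quotient a finite `p`-group. -/
def IsPSubnormal (p : ℕ) {Q : Type*} [Group Q] (K : Subgroup Q) : Prop :=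
  ∃ (n : ℕ) (L : Fin (n + 1) → Subgroup Q),
    L 0 = ⊤ ∧ L (Fin.last n) = K ∧
      ∀ i : Fin n,
        L i.succ ≤ L i.castSucc ∧
        ((L i.succ).subgroupOf (L i.castSucc)).Normal ∧
        ∃ k : ℕ, (L i.succ).relIndex (L i.castSucc) = p ^ k

/-!
The residual `O^p(G)` of a profinite group is the intersection of the open normal subgroups of
`p`-power index, and by compactness every open set containing it already contains one of them.
Hence `G/O^p(G)` is pro-`p`, `O^p` is functorial and compatible with continuous surjections, and it
is idempotent, because an extension of a pro-`p` group by a pro-`p` group is pro-`p`.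
If `O^p(G) ≤ H`, then `O^p(G) = O^p(O^p(G)) ≤ O^p(H) ≤ O^p(G)`. The containment itself can be tested
in the finite quotients since `H` is closed. Finally, an open subgroup containing `O^p(G)` contains
the kernel of a map onto a finite `p`-group, where normalizers grow; conversely `O^p` passes down a
`p`-subnormal chain, by the equality just proved.
-/

theorem exists_eq_pow_of_dvd {p m n : ℕ} [Fact p.Prime] (hmn : m ∣ n)
    (hn : ∃ k : ℕ, n = p ^ k) : ∃ k : ℕ, m = p ^ k := by
  obtain ⟨k, rfl⟩ := hn
  obtain ⟨j, -, hj⟩ := (Nat.dvd_prime_pow Fact.out).1 hmn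
  exact ⟨j, hj⟩

theorem exists_mul_eq_pow {p m n : ℕ} (hm : ∃ k : ℕ, m = p ^ k) (hn : ∃ k : ℕ, n = p ^ k) :
    ∃ k : ℕ, m * n = p ^ k := by
  obtain ⟨j, rfl⟩ := hm
  obtain ⟨k, rfl⟩ := hn
  exact ⟨j + k, (pow_add p j k).symm⟩

/-- `V` is an open normal subgroup of `G` whose index is a power of `p`. For `p` prime these are the
kernels of the continuous homomorphisms from `G` to finite discrete `p`-groups. -/
structure IsOpenNormalOfPPowIndex (p : ℕ) {G : Type*} [Group G] [TopologicalSpace G]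
    (V : Subgroup G) : Prop where
  isOpen : IsOpen (V : Set G)
  normal : V.Normal
  exists_index_eq : ∃ k : ℕ, V.index = p ^ k

namespace IsOpenNormalOfPPowIndex

variable {p : ℕ} {G : Type*} [Group G] [TopologicalSpace G] {V W : Subgroup G}

theorem top : IsOpenNormalOfPPowIndex p (⊤ : Subgroup G) :=
  ⟨isOpen_univ, inferInstance, 0, by simp⟩

variable [Fact p.Prime]

theorem comap {K : Type*} [Group K] [TopologicalSpace K] {f : K →* G}
    (hV : IsOpenNormalOfPPowIndex p V) (hf : Continuous f) :
    IsOpenNormalOfPPowIndex p (V.comap f) := by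
  have := hV.normal
  refine ⟨hV.isOpen.preimage hf, inferInstance, ?_⟩
  rw [Subgroup.index_comap]
  exact exists_eq_pow_of_dvd (V.relIndex_dvd_index_of_normal _) hV.exists_index_eq

theorem inf (hV : IsOpenNormalOfPPowIndex p V) (hW : IsOpenNormalOfPPowIndex p W) :
    IsOpenNormalOfPPowIndex p (V ⊓ W) := by
  have := hV.normal
  have := hW.normal
  refine ⟨hV.isOpen.inter hW.isOpen, inferInstance, ?_⟩
  rw [← Subgroup.relIndex_mul_index (inf_le_right : V ⊓ W ≤ W), Subgroup.inf_relIndex_right]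
  exact exists_mul_eq_pow
    (exists_eq_pow_of_dvd (V.relIndex_dvd_index_of_normal W) hV.exists_index_eq)
    hW.exists_index_eq

theorem pResidual_le [IsTopologicalGroup G] (hV : IsOpenNormalOfPPowIndex p V) :
    pResidual p G ≤ V :=
  sInf_le ⟨V.isClosed_of_isOpen hV.isOpen, hV.normal, fun _ _ _ hVU =>
    exists_eq_pow_of_dvd (Subgroup.index_dvd_of_le hVU) hV.exists_index_eq⟩

end IsOpenNormalOfPPowIndex

section Topological

variable {p : ℕ} {G : Type*} [Group G] [TopologicalSpace G]

instance pResidual_normal : (pResidual p G).Normal := by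
  rw [pResidual, sInf_eq_iInf]
  exact Subgroup.normal_iInf_normal fun _ => Subgroup.normal_iInf_normal fun hN => hN.2.1

theorem isClosed_pResidual : IsClosed (pResidual p G : Set G) := by
  rw [pResidual, Subgroup.coe_sInf]
  exact isClosed_biInter fun _ hN => hN.1

theorem pResidual_eq_pResidualFinite [Fact p.Prime] [DiscreteTopology G] :
    pResidual p G = pResidualFinite p G := by
  refine le_antisymm (le_sInf fun M ⟨hM, hMi⟩ => ?_) (le_sInf fun N ⟨_, hN, hNq⟩ => ?_)
  · exact IsOpenNormalOfPPowIndex.pResidual_le ⟨isOpen_discrete _, hM, hMi⟩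
  · exact sInf_le ⟨hN, hNq N (isOpen_discrete _) hN le_rfl⟩

theorem HasProPQuotient.map_subtype [IsTopologicalGroup G] {N : Subgroup G} [N.Normal]
    {M : Subgroup N} (hM : HasProPQuotient p M) (hN : HasProPQuotient p N) :
    HasProPQuotient p (M.map N.subtype) := by
  intro U hU _ hMU
  have hUN : IsOpen ((U ⊔ N : Subgroup G) : Set G) := Subgroup.isOpen_mono le_sup_left hU
  have hN_index : ∃ k : ℕ, (U ⊔ N).index = p ^ k := hN _ hUN inferInstance le_sup_right
  have hM_index : ∃ k : ℕ, U.relIndex N = p ^ k :=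
    hM (U.subgroupOf N) (hU.preimage continuous_subtype_val) inferInstance
      (Subgroup.map_le_iff_le_comap.1 hMU)
  rw [← Subgroup.relIndex_mul_index (le_sup_left : U ≤ U ⊔ N), Subgroup.relIndex_sup_left]
  exact exists_mul_eq_pow hM_index hN_index

end Topological

section Profinite

variable {p : ℕ} {G : Type*} [Group G] [TopologicalSpace G] [IsTopologicalGroup G]
  [CompactSpace G] [TotallyDisconnectedSpace G]

theorem le_of_forall_le_sup_openNormalSubgroup {A N : Subgroup G} (hN : IsClosed (N : Set G))
    (h : ∀ U : OpenNormalSubgroup G, A ≤ N ⊔ U.toSubgroup) : A ≤ N := by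
  intro x hxA
  by_contra hxN
  obtain ⟨U, hU⟩ := ProfiniteGrp.exist_openNormalSubgroup_sub_open_nhds_of_one
    (U := (fun g => x * g) ⁻¹' (N : Set G)ᶜ) (hN.isOpen_compl.preimage (continuous_const_mul x))
    (by simpa using hxN)
  obtain ⟨n, hn, u, hu, rfl⟩ := Subgroup.mem_sup_of_normal_right.1 (h U hxA)
  exact hU (inv_mem (show u ∈ U from hu)) (by simpa using hn)

theorem le_iff_forall_map_mk'_le {A N : Subgroup G} (hN : IsClosed (N : Set G)) :
    A ≤ N ↔ ∀ U : OpenNormalSubgroup G,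
      A.map (QuotientGroup.mk' U.toSubgroup) ≤ N.map (QuotientGroup.mk' U.toSubgroup) := by
  simp_rw [Subgroup.map_le_map_iff, QuotientGroup.ker_mk']
  exact ⟨fun h U => h.trans le_sup_left, le_of_forall_le_sup_openNormalSubgroup hN⟩

variable [Fact p.Prime]

theorem pResidual_eq_sInf_isOpenNormalOfPPowIndex :
    pResidual p G = sInf {V : Subgroup G | IsOpenNormalOfPPowIndex p V} := by
  refine le_antisymm (le_sInf fun V hV => hV.pResidual_le) (le_sInf fun N ⟨hNc, _, hNq⟩ => ?_)
  refine le_of_forall_le_sup_openNormalSubgroup hNc fun U => sInf_le ?_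
  have hNU : IsOpen ((N ⊔ U.toSubgroup : Subgroup G) : Set G) :=
    Subgroup.isOpen_mono le_sup_right U.isOpen'
  exact ⟨hNU, inferInstance, hNq _ hNU inferInstance le_sup_left⟩

theorem exists_isOpenNormalOfPPowIndex_subset {U : Set G} (hU : IsOpen U)
    (hRU : (pResidual p G : Set G) ⊆ U) :
    ∃ V : Subgroup G, IsOpenNormalOfPPowIndex p V ∧ (V : Set G) ⊆ U := by
  let ι := {V : Subgroup G // IsOpenNormalOfPPowIndex p V}
  have : Nonempty ι := ⟨⟨⊤, .top⟩⟩
  have hdir : Directed (· ⊇ ·) fun V : ι => (V.1 : Set G) := fun V W =>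
    ⟨⟨V.1 ⊓ W.1, V.2.inf W.2⟩, Set.inter_subset_left, Set.inter_subset_right⟩
  have hInter : ⋂ V : ι, (V.1 : Set G) = pResidual p G := by
    rw [pResidual_eq_sInf_isOpenNormalOfPPowIndex, Subgroup.coe_sInf, Set.biInter_eq_iInter]
    rfl
  obtain ⟨V, hVU⟩ := exists_subset_nhds_of_compactSpace hdir
    (fun V => V.1.isClosed_of_isOpen V.2.isOpen)
    fun x hx => hU.mem_nhds (hRU (hInter ▸ hx))
  exact ⟨V, V.2, hVU⟩

theorem hasProPQuotient_pResidual : HasProPQuotient p (pResidual p G) := by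
  intro U hU _ hRU
  obtain ⟨V, hV, hVU⟩ := exists_isOpenNormalOfPPowIndex_subset hU hRU
  exact exists_eq_pow_of_dvd (Subgroup.index_dvd_of_le hVU) hV.exists_index_eq

section Functoriality

variable {K : Type*} [Group K] [TopologicalSpace K] [IsTopologicalGroup K] {f : K →* G}

theorem map_pResidual_le (hf : Continuous f) : (pResidual p K).map f ≤ pResidual p G := by
  rw [pResidual_eq_sInf_isOpenNormalOfPPowIndex (G := G)]
  exact le_sInf fun V hV => Subgroup.map_le_iff_le_comap.2 (hV.comap hf).pResidual_le

theorem map_pResidual_of_surjective [CompactSpace K] [TotallyDisconnectedSpace K]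
    (hf : Continuous f) (hsurj : Function.Surjective f) :
    (pResidual p K).map f = pResidual p G := by
  refine le_antisymm (map_pResidual_le hf)
    (sInf_le ⟨?_, pResidual_normal.map f hsurj, fun W hW _ hRW => ?_⟩)
  · exact (isClosed_pResidual.isCompact.image hf).isClosed
  · rw [← W.index_comap_of_surjective hsurj]
    exact hasProPQuotient_pResidual _ (hW.preimage hf) inferInstance
      (Subgroup.map_le_iff_le_comap.1 hRW)

end Functoriality

theorem map_mk'_pResidual (U : OpenNormalSubgroup G) :
    (pResidual p G).map (QuotientGroup.mk' U.toSubgroup) = pResidual p (G ⧸ U.toSubgroup) :=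
  map_pResidual_of_surjective continuous_quot_mk (QuotientGroup.mk'_surjective _)

end Profinite

section Subgroups

variable {p : ℕ} [Fact p.Prime] {G : Type*} [Group G] [TopologicalSpace G] [IsTopologicalGroup G]
  [TotallyDisconnectedSpace G]

theorem map_subtype_pResidual_mono {H K : Subgroup G} [CompactSpace K] (hHK : H ≤ K) :
    (pResidual p H).map H.subtype ≤ (pResidual p K).map K.subtype := by
  rw [← Subgroup.subtype_comp_inclusion hHK, ← Subgroup.map_map]
  exact Subgroup.map_mono (map_pResidual_le (continuous_inclusion hHK))

theorem map_subtype_pResidual_normal {N : Subgroup G} [N.Normal] [CompactSpace N] :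
    ((pResidual p N).map N.subtype).Normal := by
  refine ⟨?_⟩
  rintro _ ⟨x, hx, rfl⟩ g
  have hconj : Continuous (MulAut.conjNormal g : N ≃* N).toMonoidHom :=
    Continuous.subtype_mk (f := fun y : N => g * (y : G) * g⁻¹) (by fun_prop) _
  exact ⟨MulAut.conjNormal g x, map_pResidual_le hconj ⟨x, hx, rfl⟩, by simp⟩

variable [CompactSpace G]

theorem map_subtype_pResidual_pResidual :
    (pResidual p (pResidual p G)).map (pResidual p G).subtype = pResidual p G := by
  have : CompactSpace (pResidual p G) := isCompact_iff_compactSpace.1 isClosed_pResidual.isCompact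
  refine le_antisymm (map_pResidual_le continuous_subtype_val)
    (sInf_le ⟨?_, map_subtype_pResidual_normal, ?_⟩)
  · exact isClosed_pResidual.isClosedEmbedding_subtypeVal.isClosedMap _ isClosed_pResidual
  · exact hasProPQuotient_pResidual.map_subtype hasProPQuotient_pResidual

theorem map_subtype_pResidual_eq_iff {H : Subgroup G} (hH : IsClosed (H : Set G)) :
    (pResidual p H).map H.subtype = pResidual p G ↔ pResidual p G ≤ H := by
  have : CompactSpace H := isCompact_iff_compactSpace.1 hH.isCompact
  have : CompactSpace (pResidual p G) := isCompact_iff_compactSpace.1 isClosed_pResidual.isCompact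
  refine ⟨fun h => h ▸ Subgroup.map_subtype_le _, fun h => ?_⟩
  refine le_antisymm (map_pResidual_le continuous_subtype_val) ?_
  calc pResidual p G
      = (pResidual p (pResidual p G)).map (pResidual p G).subtype :=
        map_subtype_pResidual_pResidual.symm
    _ ≤ (pResidual p H).map H.subtype := map_subtype_pResidual_mono h

end Subgroups

section PSubnormal

variable {p : ℕ} {G : Type*} [Group G] {K L R : Subgroup G}

theorem IsPSubnormal.top : IsPSubnormal p (⊤ : Subgroup G) :=
  ⟨0, fun _ => ⊤, rfl, rfl, fun i => i.elim0⟩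

theorem IsPSubnormal.of_normal_subgroupOf (hL : IsPSubnormal p L) (hKL : K ≤ L)
    (hn : (K.subgroupOf L).Normal) (hi : ∃ k : ℕ, K.relIndex L = p ^ k) : IsPSubnormal p K := by
  obtain ⟨n, c, hzero, hlast, hc⟩ := hL
  refine ⟨n + 1, Fin.snoc (α := fun _ => Subgroup G) c K, ?_, by simp, fun i => ?_⟩
  · rw [← Fin.castSucc_zero, Fin.snoc_castSucc, hzero]
  · induction i using Fin.lastCases with
    | last =>
      rw [Fin.succ_last, Fin.snoc_last, Fin.snoc_castSucc, hlast]
      exact ⟨hKL, hn, hi⟩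
    | cast i =>
      rw [Fin.succ_castSucc, Fin.snoc_castSucc, Fin.snoc_castSucc]
      exact hc i

theorem lt_normalizer_of_normalizerCondition_quotient [R.Normal]
    (hR : NormalizerCondition (G ⧸ R)) (hRK : R ≤ K) (hK : K < ⊤) :
    K < Subgroup.normalizer (K : Set G) := by
  have hsurj := QuotientGroup.mk'_surjective R
  have hcomap : (K.map (QuotientGroup.mk' R)).comap (QuotientGroup.mk' R) = K :=
    Subgroup.comap_map_eq_self (by rwa [QuotientGroup.ker_mk'])
  have hlt := hR (K.map (QuotientGroup.mk' R)) <| by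
    rwa [← Subgroup.comap_lt_comap_of_surjective hsurj, hcomap, Subgroup.comap_top]
  rwa [← Subgroup.comap_lt_comap_of_surjective hsurj,
    Subgroup.comap_normalizer_eq_of_surjective _ hsurj, hcomap] at hlt

variable [Fact p.Prime]

theorem normalizerCondition_quotient_of_index_eq_pow [R.Normal]
    (hR : ∃ k : ℕ, R.index = p ^ k) : NormalizerCondition (G ⧸ R) := by
  obtain ⟨k, hk⟩ := hR
  have hcard : Nat.card (G ⧸ R) = p ^ k := hk
  have : Finite (G ⧸ R) :=
    Nat.finite_of_card_ne_zero (hcard ▸ pow_ne_zero k (Fact.out : p.Prime).ne_zero)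
  have : Group.IsNilpotent (G ⧸ R) := (IsPGroup.of_card hcard).isNilpotent
  exact Group.normalizerCondition_of_isNilpotent

theorem isPSubnormal_of_le_of_index_eq_pow [R.Normal] (hR : ∃ k : ℕ, R.index = p ^ k)
    (hRK : R ≤ K) : IsPSubnormal p K := by
  induction hn : K.index using Nat.strong_induction_on generalizing K with
  | _ n ih =>
    obtain rfl | hK := eq_top_or_lt_top K
    · exact .top
    have hlt := lt_normalizer_of_normalizerCondition_quotient
      (normalizerCondition_quotient_of_index_eq_pow hR) hRK hK
    have hK_index := exists_eq_pow_of_dvd (Subgroup.index_dvd_of_le hRK) hR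
    have : K.FiniteIndex := by
      obtain ⟨k, hk⟩ := hK_index
      exact ⟨hk ▸ pow_ne_zero k (Fact.out : p.Prime).ne_zero⟩
    have hnormalizer : IsPSubnormal p (Subgroup.normalizer (K : Set G)) :=
      ih _ (hn ▸ Subgroup.index_strictAnti hlt) (hRK.trans hlt.le) rfl
    exact hnormalizer.of_normal_subgroupOf hlt.le inferInstance
      (exists_eq_pow_of_dvd (Subgroup.relIndex_dvd_index_of_le hlt.le) hK_index)

variable [TopologicalSpace G] [IsTopologicalGroup G] [CompactSpace G] [TotallyDisconnectedSpace G]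

theorem pResidual_le_of_normal_subgroupOf (hK : IsOpen (K : Set G)) (hL : IsClosed (L : Set G))
    (hn : (K.subgroupOf L).Normal) (hi : ∃ k : ℕ, K.relIndex L = p ^ k)
    (hRL : pResidual p G ≤ L) : pResidual p G ≤ K := by
  have hKL : IsOpenNormalOfPPowIndex p (K.subgroupOf L) :=
    ⟨hK.preimage continuous_subtype_val, hn, hi⟩
  rw [← (map_subtype_pResidual_eq_iff hL).2 hRL, Subgroup.map_le_iff_le_comap]
  exact hKL.pResidual_le

theorem IsPSubnormal.pResidual_le (hKo : IsOpen (K : Set G)) (hK : IsPSubnormal p K) :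
    pResidual p G ≤ K := by
  obtain ⟨n, c, hzero, rfl, hc⟩ := hK
  have hanti : Antitone c := Fin.antitone_iff_succ_le.2 fun i => (hc i).1
  have hopen (i) : IsOpen (c i : Set G) := Subgroup.isOpen_mono (hanti (Fin.le_last i)) hKo
  suffices ∀ i, pResidual p G ≤ c i from this _
  intro i
  induction i using Fin.induction with
  | zero => exact hzero ▸ le_top
  | succ i ih =>
    obtain ⟨-, hn, hi⟩ := hc i
    exact pResidual_le_of_normal_subgroupOf (hopen _) (Subgroup.isClosed_of_isOpen _ (hopen _))
      hn hi ih

theorem isPSubnormal_iff_pResidual_le (hKo : IsOpen (K : Set G)) :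
    IsPSubnormal p K ↔ pResidual p G ≤ K := by
  refine ⟨IsPSubnormal.pResidual_le hKo, fun hRK => ?_⟩
  obtain ⟨V, hV, hVK⟩ := exists_isOpenNormalOfPPowIndex_subset hKo hRK
  have := hV.normal
  exact isPSubnormal_of_le_of_index_eq_pow hV.exists_index_eq hVK

end PSubnormal

/-- Let `H` be a closed subgroup of a profinite group `G` and `p` a prime.
Writing `G_U = G/U` and `H_U = HU/U` (the image of `H` in `G_U`) for `U` an open normal
subgroup of `G`, the following are equivalent:
(1) `O^p(H) = O^p(G)`;
(2) `O^p(H_U) = O^p(G_U)` for every open normal subgroup `U`;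
(3) `O^p(G) ≤ H`;
(4) `O^p(G_U) ≤ H_U` for every open normal subgroup `U`;
(5) `H_U` is `p`-subnormal in `G_U` for every open normal subgroup `U`. -/
theorem pResidual_tfae (p : ℕ) (hp : p.Prime)
    {G : Type*} [Group G] [TopologicalSpace G] [IsTopologicalGroup G]
    [CompactSpace G] [T2Space G] [TotallyDisconnectedSpace G]
    (H : Subgroup G) (hH : IsClosed (H : Set G)) :
    List.TFAE
      [ Subgroup.map H.subtype (pResidual p ↥H) = pResidual p G,
        ∀ U : OpenNormalSubgroup G,
          Subgroup.map (Subgroup.map (QuotientGroup.mk' U.toSubgroup) H).subtype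
              (pResidualFinite p ↥(Subgroup.map (QuotientGroup.mk' U.toSubgroup) H))
            = pResidualFinite p (G ⧸ U.toSubgroup),
        pResidual p G ≤ H,
        ∀ U : OpenNormalSubgroup G,
          pResidualFinite p (G ⧸ U.toSubgroup)
            ≤ Subgroup.map (QuotientGroup.mk' U.toSubgroup) H,
        ∀ U : OpenNormalSubgroup G,
          IsPSubnormal p (Subgroup.map (QuotientGroup.mk' U.toSubgroup) H) ] := by
  have : Fact p.Prime := ⟨hp⟩
  simp_rw [← pResidual_eq_pResidualFinite]
  tfae_have 1 ↔ 3 := map_subtype_pResidual_eq_iff hH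
  tfae_have 2 ↔ 4 := forall_congr' fun U => map_subtype_pResidual_eq_iff (isClosed_discrete _)
  tfae_have 3 ↔ 4 := by simp_rw [le_iff_forall_map_mk'_le hH, map_mk'_pResidual]
  tfae_have 5 ↔ 4 := forall_congr' fun U => isPSubnormal_iff_pResidual_le (isOpen_discrete _)
  tfae_finish
end

section
/- Let G be an abelian profinite group. Then the set of closed subgroups of G is countable if and only if G is topologically isomorphic to A × ℤ_{p_1} × ⋯ × ℤ_{p_r} for some r ≥ 0, pairwise distinct primes p_1, …, p_r, and some finite abelian group A; here ℤ_{p_i} denotes the additive group of p_i-adic integers with its natural topology, and topologically isomorphic means there is a group isomorphism that is also a homeomorphism. -/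
/-!
Every element `g` of an abelian profinite group `G` extends to a continuous homomorphism
`φ : ∏ q, ℤ_[q] →+ G` with `φ 1 = g`, and `φ` is determined by `g` because the integers are dense.
If `G` has only countably many closed subgroups, Baire's theorem provides `g` for which `φ` has open
range. The images under `φ` of the partial products of the `ℤ_[q]` show that `φ` vanishes on all but
finitely many factors; restricting `φ` to the factors on which `ker φ` has zero projection gives an
injective `f : R →+ G` of finite index `n`, where `R` is a finite product of rings `ℤ_[q]`.

The preimage of `n • G` under `f` is a principal ideal `d * R`. An element `x` with `n • x = f d`
extends to a homomorphism `ψ` with `n • ψ c = f (d * c)`, whose range is a complement of the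
`n`-torsion of `G`; the latter is finite since it meets the range of `f` trivially.

Conversely, a closed subgroup of `A × ∏ i, ℤ_[p i]` with `A` finite is the closure of its points
with integral coordinates, and the finitely generated group `A × (ι → ℤ)` has only countably many
subgroups.
-/

/-- A bundled finite abelian group, regarded as a topological group with the discrete
topology. -/
structure FiniteAddCommGroup : Type 1 where
  carrier : Type
  [grp : AddCommGroup carrier]
  [fin : Finite carrier]

attribute [instance] FiniteAddCommGroup.grp FiniteAddCommGroup.fin

instance (A : FiniteAddCommGroup) : TopologicalSpace A.carrier := ⊥
instance (A : FiniteAddCommGroup) : DiscreteTopology A.carrier := ⟨rfl⟩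

section PadicInt

variable {p : ℕ} [Fact p.Prime]

theorem padicInt_dvd_iff_norm_le {x y : ℤ_[p]} : x ∣ y ↔ ‖y‖ ≤ ‖x‖ := by
  constructor
  · rintro ⟨c, rfl⟩
    rw [norm_mul]
    exact mul_le_of_le_one_right (norm_nonneg x) c.norm_le_one
  · intro h
    rcases eq_or_ne x 0 with rfl | hx
    · simpa using h
    · have hx' : (x : ℚ_[p]) ≠ 0 := fun h0 => hx (Subtype.ext h0)
      have hquot : ‖(y / x : ℚ_[p])‖ ≤ 1 := by
        rw [norm_div]
        exact div_le_one_of_le₀ h (norm_nonneg _)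
      exact ⟨⟨y / x, hquot⟩, Subtype.ext (mul_div_cancel₀ (y : ℚ_[p]) hx').symm⟩

theorem isOpen_setOf_padicInt_dvd {x : ℤ_[p]} (hx : x ≠ 0) : IsOpen {y | x ∣ y} := by
  have hball : {y | x ∣ y} = Metric.closedBall 0 ‖x‖ := by
    ext y
    rw [mem_closedBall_zero_iff, ← padicInt_dvd_iff_norm_le, Set.mem_ofPred_eq]
  rw [hball]
  exact IsUltrametricDist.isOpen_closedBall 0 (norm_ne_zero_iff.2 hx)

theorem int_dvd_of_forall_padicInt_dvd {n : ℕ} {k : ℤ}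
    (h : ∀ (q : ℕ) [Fact q.Prime], q ∣ n → (n : ℤ_[q]) ∣ k) : (n : ℤ) ∣ k := by
  rw [Int.natCast_dvd, Nat.dvd_iff_prime_pow_dvd_dvd]
  intro q m hq hqm
  rcases eq_or_ne m 0 with rfl | hm
  · simp
  · have : Fact q.Prime := ⟨hq⟩
    have hdvd : (q : ℤ_[q]) ^ m ∣ k :=
      (mod_cast Nat.cast_dvd_cast hqm : (q : ℤ_[q]) ^ m ∣ n).trans
        (h q ((dvd_pow_self q hm).trans hqm))
    rw [PadicInt.pow_p_dvd_int_iff] at hdvd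
    exact Int.natCast_dvd.1 (mod_cast hdvd)

theorem exists_forall_intCast_mem_of_isOpen {V : Set ℤ_[p]} (hV : IsOpen V) (hne : V.Nonempty) :
    ∃ (z : ℤ) (n : ℕ), ∀ k : ℤ, (p : ℤ) ^ n ∣ k - z → (k : ℤ_[p]) ∈ V := by
  obtain ⟨z, hz⟩ := PadicInt.denseRange_intCast.exists_mem_open hV hne
  obtain ⟨ε, hε, hball⟩ := Metric.isOpen_iff.1 hV _ hz
  obtain ⟨n, hn⟩ := PadicInt.exists_pow_neg_lt p hε
  refine ⟨z, n, fun k hk => hball ?_⟩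
  rw [mem_ball_iff_norm, ← Int.cast_sub]
  exact ((PadicInt.norm_int_le_pow_iff_dvd).2 (mod_cast hk)).trans_lt hn

end PadicInt

section PadicProduct

variable {ι : Type*} {p : ι → ℕ} [∀ i, Fact (p i).Prime]

theorem denseRange_intCast_pi_padicInt (hp : Function.Injective p) :
    DenseRange (Int.cast : ℤ → ∀ i, ℤ_[p i]) := by
  refine dense_iff_inter_open.2 fun U hU ⟨c, hc⟩ => ?_
  obtain ⟨t, V, hV, hVU⟩ := isOpen_pi_iff.1 hU c hc
  choose z n hzn using fun i : t =>
    exists_forall_intCast_mem_of_isOpen (hV i i.2).1 ⟨c i, (hV i i.2).2⟩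
  have hcop : Pairwise fun i j : t =>
      IsCoprime (Ideal.span {(p i : ℤ) ^ n i}) (Ideal.span {(p j : ℤ) ^ n j}) := by
    intro i j hij
    rw [Ideal.isCoprime_span_singleton_iff]
    refine IsCoprime.pow (Nat.isCoprime_iff_coprime.2 ?_)
    exact (Nat.coprime_primes Fact.out Fact.out).2 (hp.ne (Subtype.coe_ne_coe.2 hij))
  obtain ⟨k, hk⟩ := Ideal.exists_forall_sub_mem_ideal hcop z
  exact ⟨k, hVU fun i hi => hzn ⟨i, hi⟩ k (Ideal.mem_span_singleton.1 (hk ⟨i, hi⟩)), k, rfl⟩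

theorem eq_top_of_isClosed_of_one_mem (hp : Function.Injective p)
    {K : AddSubgroup (∀ i, ℤ_[p i])} (hK : IsClosed (K : Set (∀ i, ℤ_[p i])))
    (h1 : 1 ∈ K) : K = ⊤ := by
  refine eq_top_iff.2 fun c _ => (denseRange_intCast_pi_padicInt hp).induction_on
    (p := (· ∈ K)) c hK fun k => ?_
  simpa using zsmul_mem h1 k

theorem map_mem_of_isClosed_of_map_one_mem (hp : Function.Injective p) {G : Type*} [AddGroup G]
    [TopologicalSpace G] {H : AddSubgroup G} (hH : IsClosed (H : Set G))
    {φ : (∀ i, ℤ_[p i]) →+ G} (hφ : Continuous φ) (h1 : φ 1 ∈ H) (c : ∀ i, ℤ_[p i]) : φ c ∈ H := by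
  have htop : H.comap φ = ⊤ := eq_top_of_isClosed_of_one_mem hp (hH.preimage hφ) h1
  exact AddSubgroup.mem_comap.1 (htop ▸ AddSubgroup.mem_top c)

theorem addMonoidHom_ext_of_map_one_eq (hp : Function.Injective p) {G : Type*} [AddGroup G]
    [TopologicalSpace G] [T2Space G] {φ ψ : (∀ i, ℤ_[p i]) →+ G} (hφ : Continuous φ)
    (hψ : Continuous ψ) (h1 : φ 1 = ψ 1) : φ = ψ :=
  AddMonoidHom.eq_of_eqOn_top <| (eq_top_of_isClosed_of_one_mem hp
    (K := φ.eqLocus ψ) (isClosed_eq hφ hψ) h1).ge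

theorem mul_mem_of_isClosed (hp : Function.Injective p) {K : AddSubgroup (∀ i, ℤ_[p i])}
    (hK : IsClosed (K : Set (∀ i, ℤ_[p i]))) (c : ∀ i, ℤ_[p i]) {x : ∀ i, ℤ_[p i]}
    (hx : x ∈ K) : c * x ∈ K :=
  map_mem_of_isClosed_of_map_one_mem hp hK (φ := AddMonoidHom.mulRight x)
    (continuous_mul_const x) (by simpa using hx) c

theorem exists_forall_mem_iff_dvd_of_isClosed [Finite ι] (hp : Function.Injective p)
    {K : AddSubgroup (∀ i, ℤ_[p i])} (hK : IsClosed (K : Set (∀ i, ℤ_[p i]))) :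
    ∃ d, ∀ c, c ∈ K ↔ d ∣ c := by
  let I : Ideal (∀ i, ℤ_[p i]) :=
    { K with smul_mem' := fun c _ hx => mul_mem_of_isClosed hp hK c hx }
  obtain ⟨d, hd⟩ := (IsPrincipalIdealRing.principal I).principal
  refine ⟨d, fun c => ?_⟩
  rw [← Ideal.mem_span_singleton, ← Ideal.submodule_span_eq, ← hd]
  rfl

end PadicProduct

theorem mem_of_isClosed_of_forall_single_mem {ι : Type*} [DecidableEq ι] {M : ι → Type*}
    [∀ i, AddCommGroup (M i)] [∀ i, TopologicalSpace (M i)] {K : AddSubgroup (∀ i, M i)}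
    (hK : IsClosed (K : Set (∀ i, M i))) {c : ∀ i, M i} (hc : ∀ i, Pi.single i (c i) ∈ K) :
    c ∈ K := by
  let s (i : ι) : Submodule ℤ (M i) := K.toIntSubmodule.comap (LinearMap.single ℤ M i)
  have hsK : ⨆ i, (s i).map (LinearMap.single ℤ M i) ≤ K.toIntSubmodule :=
    iSup_le fun i => Submodule.map_comap_le _ _
  refine closure_minimal hsK hK ?_
  rw [Submodule.closure_coe_iSup_map_single]
  exact fun i _ => subset_closure (hc i)

section ExtendByZero

variable {ι : Type*} (M : ι → Type*) [∀ i, AddZeroClass (M i)] (S : Set ι)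

open Classical in
/-- Extension by zero of a family indexed by a subset of `ι`, the inclusion of the partial product
`∏ i ∈ S, M i` in the full product. -/
noncomputable def extendByZero : (∀ i : S, M i) →+ ∀ i, M i where
  toFun c i := if h : i ∈ S then c ⟨i, h⟩ else 0
  map_zero' := by ext i; simp
  map_add' c d := by ext i; by_cases h : i ∈ S <;> simp [h]

variable {S}

theorem extendByZero_apply_coe (c : ∀ i : S, M i) (i : S) : extendByZero M S c i = c i := by
  simp [extendByZero]

theorem extendByZero_apply_of_notMem (c : ∀ i : S, M i) {i : ι} (hi : i ∉ S) :
    extendByZero M S c i = 0 := by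
  simp [extendByZero, hi]

variable {M}

theorem extendByZero_restrict {c : ∀ i, M i} (hc : ∀ i ∉ S, c i = 0) :
    extendByZero M S (fun i : S => c i) = c := by
  ext i
  by_cases hi : i ∈ S
  · exact extendByZero_apply_coe M _ ⟨i, hi⟩
  · rw [extendByZero_apply_of_notMem M _ hi, hc i hi]

theorem continuous_extendByZero [∀ i, TopologicalSpace (M i)] :
    Continuous (extendByZero M S) := by
  refine continuous_pi fun i => ?_
  by_cases hi : i ∈ S
  · simpa [extendByZero, hi] using continuous_apply (⟨i, hi⟩ : S)
  · simpa [extendByZero, hi] using continuous_const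

end ExtendByZero

instance fact_prime_coe_primes (q : Nat.Primes) : Fact (q : ℕ).Prime := ⟨q.2⟩

/-- The ring of profinite integers, in its decomposition as the product of all the rings of
`p`-adic integers. -/
abbrev ProfiniteInt : Type := ∀ q : Nat.Primes, ℤ_[q]

section UniversalProperty

variable {G : Type*} [AddCommGroup G] [TopologicalSpace G] [IsTopologicalAddGroup G]

theorem mem_of_zero_mem_topologicalClosure_zmultiples_one {g x : G}
    (hx : (0, x) ∈ (AddSubgroup.zmultiples ((1 : ProfiniteInt), g)).topologicalClosure)
    {U : AddSubgroup G} (hU : IsOpen (U : Set G)) (hindex : U.index ≠ 0) : x ∈ U := by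
  let F : Set Nat.Primes := {q | (q : ℕ) ∣ U.index}
  have hF : F.Finite :=
    Set.Finite.of_finite_image (U.index.divisors.finite_toSet.subset (by
      rintro _ ⟨q, hq, rfl⟩
      exact Nat.mem_divisors.2 ⟨hq, hindex⟩)) Nat.Primes.coe_nat_injective.injOn
  let V : Set ProfiniteInt := F.pi fun q => {y | (U.index : ℤ_[q]) ∣ y}
  have hV : IsOpen V := isOpen_set_pi hF fun q _ =>
    isOpen_setOf_padicInt_dvd (Nat.cast_ne_zero.2 hindex)
  -- A multiple `k • (1, g)` with `k ∈ V` has `k` divisible by the index of `U`, so `k • g ∈ U`.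
  have hclosed : IsClosed (Vᶜ ×ˢ Set.univ ∪ Set.univ ×ˢ (U : Set G)) :=
    (hV.isClosed_compl.prod isClosed_univ).union
      (isClosed_univ.prod (U.isClosed_of_isOpen hU))
  have hzmultiples : (AddSubgroup.zmultiples ((1 : ProfiniteInt), g) : Set (ProfiniteInt × G)) ⊆
      Vᶜ ×ˢ Set.univ ∪ Set.univ ×ˢ (U : Set G) := by
    rintro _ ⟨k, rfl⟩
    by_cases hk : (k : ProfiniteInt) ∈ V
    · obtain ⟨l, rfl⟩ : (U.index : ℤ) ∣ k := int_dvd_of_forall_padicInt_dvd fun q hq hdvd =>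
        hk ⟨q, hq.out⟩ hdvd
      have hmem : ((U.index : ℤ) * l) • g ∈ U := by
        rw [mul_zsmul, natCast_zsmul]
        exact U.nsmul_index_mem _
      exact Or.inr ⟨trivial, hmem⟩
    · exact Or.inl ⟨by simpa using hk, trivial⟩
  simpa [V] using closure_minimal hzmultiples hclosed hx

variable [CompactSpace G] [TotallyDisconnectedSpace G]

theorem exists_continuous_addMonoidHom_map_one_eq (g : G) :
    ∃ φ : ProfiniteInt →+ G, Continuous φ ∧ φ 1 = g := by
  let Γ := (AddSubgroup.zmultiples ((1 : ProfiniteInt), g)).topologicalClosure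
  have hΓ : IsClosed (Γ : Set (ProfiniteInt × G)) := AddSubgroup.isClosed_topologicalClosure _
  have hone : ((1 : ProfiniteInt), g) ∈ Γ :=
    AddSubgroup.le_topologicalClosure _ (AddSubgroup.mem_zmultiples _)
  have : CompactSpace Γ := isCompact_iff_compactSpace.1 hΓ.isCompact
  let π : Γ →+ ProfiniteInt := (AddMonoidHom.fst _ G).comp Γ.subtype
  have hπ : Continuous π := continuous_fst.comp continuous_subtype_val
  have hsurj : Function.Surjective π := AddMonoidHom.range_eq_top.1 <|
    eq_top_of_isClosed_of_one_mem (ι := Nat.Primes) Nat.Primes.coe_nat_injective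
      (isCompact_range hπ).isClosed ⟨⟨_, hone⟩, rfl⟩
  have hinj : Function.Injective π := by
    rw [injective_iff_map_eq_zero]
    rintro ⟨⟨c, x⟩, hcx⟩ hc
    obtain rfl : c = 0 := hc
    suffices hx : x = 0 by subst hx; rfl
    by_contra hx
    obtain ⟨U, hU⟩ := ProfiniteGrp.exist_openNormalAddSubgroup_sub_open_nhds_of_zero
      (G := G) (U := {x}ᶜ) isOpen_compl_singleton (by simpa using Ne.symm hx)
    have : Finite (G ⧸ U.toAddSubgroup) := AddSubgroup.quotient_finite_of_isOpen _ U.isOpen'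
    exact hU (mem_of_zero_mem_topologicalClosure_zmultiples_one hcx U.isOpen'
      AddSubgroup.index_ne_zero_of_finite) rfl
  let e : Γ ≃+ ProfiniteInt := AddEquiv.ofBijective π ⟨hinj, hsurj⟩
  have he : Continuous e.symm :=
    (Continuous.homeoOfEquivCompactToT2 (f := e.toEquiv) hπ).symm.continuous
  refine ⟨((AddMonoidHom.snd _ G).comp Γ.subtype).comp e.symm.toAddMonoidHom,
    (continuous_snd.comp continuous_subtype_val).comp he, ?_⟩
  have hsymm : e.symm 1 = ⟨_, hone⟩ := e.symm_apply_eq.2 rfl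
  simp [hsymm]

end UniversalProperty

theorem exists_isOpen_topologicalClosure_zmultiples {G : Type*} [AddCommGroup G]
    [TopologicalSpace G] [IsTopologicalAddGroup G] [BaireSpace G]
    [Countable {H : AddSubgroup G // IsClosed (H : Set G)}] :
    ∃ g : G, IsOpen ((AddSubgroup.zmultiples g).topologicalClosure : Set G) := by
  let Z (g : G) : {H : AddSubgroup G // IsClosed (H : Set G)} :=
    ⟨(AddSubgroup.zmultiples g).topologicalClosure, AddSubgroup.isClosed_topologicalClosure _⟩
  have hcover : ⋃ H : Set.range Z, (H.1.1 : Set G) = Set.univ :=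
    Set.eq_univ_of_forall fun g => Set.mem_iUnion.2 ⟨⟨Z g, g, rfl⟩,
      AddSubgroup.le_topologicalClosure _ (AddSubgroup.mem_zmultiples g)⟩
  obtain ⟨⟨_, g, rfl⟩, x, hx⟩ := nonempty_interior_of_iUnion_of_closed (fun H => H.1.2) hcover
  exact ⟨g, AddSubgroup.isOpen_of_mem_nhds _ (mem_interior_iff_mem_nhds.1 hx)⟩

theorem finite_of_countable_set {α : Type*} [Countable (Set α)] : Finite α := by
  by_contra hα
  rw [not_finite_iff_infinite] at hα
  obtain ⟨f, hf⟩ := exists_injective_nat (Set α)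
  exact Function.cantor_injective _ ((Infinite.natEmbedding α).injective.comp hf)

section PartialProducts

variable {ι : Type*} [DecidableEq ι] {p : ι → ℕ} [∀ i, Fact (p i).Prime] {G : Type*}
  [AddGroup G] [TopologicalSpace G]

theorem map_single_one_eq_zero_of_mem_range_extendByZero [T1Space G] (hp : Function.Injective p)
    {φ : (∀ i, ℤ_[p i]) →+ G} (hφ : Continuous φ) {S : Set ι} {i : ι} (hi : i ∉ S)
    (h : φ (Pi.single i 1) ∈ (φ.comp (extendByZero (fun i => ℤ_[p i]) S)).range) :
    φ (Pi.single i 1) = 0 := by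
  obtain ⟨c, hc⟩ := h
  let x := extendByZero (fun i => ℤ_[p i]) S c
  have hxi : x i = 0 := extendByZero_apply_of_notMem (fun i => ℤ_[p i]) c hi
  have hker : Pi.single i 1 - x ∈ φ.ker := by
    rw [AddMonoidHom.mem_ker, map_sub, ← hc, AddMonoidHom.comp_apply, sub_self]
  -- The kernel is an ideal, and the idempotent `Pi.single i 1` kills `x`.
  have hmul : Pi.single i 1 * (Pi.single i 1 - x) = Pi.single i 1 := by
    rw [← Pi.single_mul_left]
    simp [hxi]
  rw [← AddMonoidHom.mem_ker, ← hmul]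
  exact mul_mem_of_isClosed hp (isClosed_singleton.preimage hφ) _ hker

theorem finite_setOf_map_single_one_ne_zero [T2Space G]
    [Countable {H : AddSubgroup G // IsClosed (H : Set G)}] (hp : Function.Injective p)
    {φ : (∀ i, ℤ_[p i]) →+ G} (hφ : Continuous φ) : {i | φ (Pi.single i 1) ≠ 0}.Finite := by
  let R (X : Set {i | φ (Pi.single i 1) ≠ 0}) : {H : AddSubgroup G // IsClosed (H : Set G)} :=
    ⟨(φ.comp (extendByZero (fun i => ℤ_[p i]) ((↑) '' X))).range,
      (isCompact_range (hφ.comp continuous_extendByZero)).isClosed⟩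
  have hmem (X) (i) : φ (Pi.single i.1 1) ∈ (R X).1 ↔ i ∈ X := by
    refine ⟨fun h => ?_, fun hi => ?_⟩
    · by_contra hi
      exact i.2 (map_single_one_eq_zero_of_mem_range_extendByZero hp hφ
        (by simpa using fun _ => hi) h)
    · refine ⟨fun j => (Pi.single i.1 1 : ∀ i, ℤ_[p i]) j, ?_⟩
      rw [AddMonoidHom.comp_apply, extendByZero_restrict]
      exact fun j hj => Pi.single_eq_of_ne (fun hji => hj ⟨i, hi, hji.symm⟩) _
  have hR : Function.Injective R := fun X Y h => Set.ext fun i => by rw [← hmem, h, hmem]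
  have := hR.countable
  exact Set.finite_coe_iff.1 finite_of_countable_set

theorem isOpen_range_extendByZero_sup (hp : Function.Injective p)
    {K : AddSubgroup (∀ i, ℤ_[p i])} (hK : IsClosed (K : Set (∀ i, ℤ_[p i])))
    (hfin : {i | Pi.single i 1 ∉ K}.Finite) :
    IsOpen (((extendByZero (fun i => ℤ_[p i]) {i | ∀ c ∈ K, c i = 0}).range ⊔ K :
      AddSubgroup (∀ i, ℤ_[p i])) : Set (∀ i, ℤ_[p i])) := by
  set S : Set ι := {i | ∀ c ∈ K, c i = 0}
  have hex (i) : ∃ b ∈ K, i ∉ S → b i ≠ 0 := by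
    by_cases hi : i ∈ S
    · exact ⟨0, zero_mem K, fun h => absurd hi h⟩
    · simp only [S, Set.mem_ofPred_eq, not_forall] at hi
      obtain ⟨b, hb, hbi⟩ := hi
      exact ⟨b, hb, fun _ => hbi⟩
  choose b hbK hb using hex
  let V : Set (∀ i, ℤ_[p i]) := ({i | Pi.single i 1 ∉ K} \ S).pi fun i => {y | b i i ∣ y}
  have hV : IsOpen V := isOpen_set_pi hfin.sdiff fun i hi =>
    isOpen_setOf_padicInt_dvd (hb i hi.2)
  refine AddSubgroup.isOpen_of_mem_nhds _ (g := 0) <|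
    Filter.mem_of_superset (hV.mem_nhds fun i _ => dvd_zero _) fun c hc => ?_
  have hsub : c - extendByZero (fun i => ℤ_[p i]) S (fun i => c i) ∈ K := by
    refine mem_of_isClosed_of_forall_single_mem hK fun i => ?_
    by_cases hiS : i ∈ S
    · rw [Pi.sub_apply, extendByZero_apply_coe (fun i => ℤ_[p i]) _ ⟨i, hiS⟩]
      simp
    rw [Pi.sub_apply, extendByZero_apply_of_notMem (fun i => ℤ_[p i]) _ hiS, sub_zero]
    by_cases hiK : Pi.single i 1 ∈ K
    · simpa [← Pi.single_mul_right] using mul_mem_of_isClosed hp hK (Pi.single i (c i)) hiK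
    · obtain ⟨t, ht⟩ := hc i ⟨hiK, hiS⟩
      rw [ht, mul_comm, Pi.single_mul_left]
      exact mul_mem_of_isClosed hp hK _ (hbK i)
  rw [← add_sub_cancel (extendByZero (fun i => ℤ_[p i]) S fun i => c i) c]
  exact AddSubgroup.add_mem_sup ⟨_, rfl⟩ hsub

end PartialProducts

section Structure

variable {G : Type*} [AddCommGroup G]

theorem finite_ker_nsmul_of_finiteIndex_range {R : Type*} [AddCommGroup R] [IsAddTorsionFree R]
    {f : R →+ G} (hf : Function.Injective f) [f.range.FiniteIndex] {n : ℕ} (hn : n ≠ 0) :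
    Finite (nsmulAddMonoidHom n : G →+ G).ker := by
  let π : (nsmulAddMonoidHom n : G →+ G).ker →+ G ⧸ f.range :=
    (QuotientAddGroup.mk' f.range).comp (AddSubgroup.subtype _)
  refine Finite.of_injective π ((injective_iff_map_eq_zero π).2 ?_)
  rintro ⟨x, hx⟩ hπx
  obtain ⟨y, rfl⟩ := (QuotientAddGroup.eq_zero_iff x).1 hπx
  have hy : n • y = 0 := hf (by rw [map_nsmul, map_zero]; exact hx)
  obtain rfl : y = 0 := (nsmul_eq_zero_iff_right hn).1 hy
  exact Subtype.ext (map_zero f)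

variable [TopologicalSpace G] [IsTopologicalAddGroup G] [CompactSpace G]

theorem nonempty_ker_prod_continuousLinearEquiv [T2Space G] {H R : Type*} [AddCommGroup H]
    [TopologicalSpace H] [T1Space H] [AddCommGroup R] [TopologicalSpace R] [CompactSpace R]
    {h : G →+ H} (hh : Continuous h) {ψ : R →+ G} (hψ : Continuous ψ)
    (hinj : Function.Injective (h.comp ψ)) (hrange : h.range ≤ (h.comp ψ).range) :
    Nonempty ((h.ker × R) ≃L[ℤ] G) := by
  have hker : IsClosed (h.ker : Set G) := isClosed_singleton.preimage hh
  have : CompactSpace h.ker := isCompact_iff_compactSpace.1 hker.isCompact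
  let Φ : h.ker × R →+ G := h.ker.subtype.coprod ψ
  have hΦ : Continuous Φ :=
    (continuous_subtype_val.comp continuous_fst).add (hψ.comp continuous_snd)
  have hΦinj : Function.Injective Φ := by
    rw [injective_iff_map_eq_zero]
    rintro ⟨⟨k, hk⟩, r⟩ hkr
    replace hkr : k + ψ r = 0 := hkr
    obtain rfl : r = 0 := (injective_iff_map_eq_zero _).1 hinj r <| by
      simpa [AddMonoidHom.mem_ker.1 hk] using congrArg h hkr
    obtain rfl : k = 0 := by simpa using hkr
    rfl
  have hΦsurj : Function.Surjective Φ := by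
    intro x
    obtain ⟨r, hr⟩ := hrange ⟨x, rfl⟩
    have hx : x - ψ r ∈ h.ker := by
      rw [AddMonoidHom.mem_ker, map_sub, ← hr, AddMonoidHom.comp_apply, sub_self]
    exact ⟨(⟨x - ψ r, hx⟩, r), sub_add_cancel x (ψ r)⟩
  let e : h.ker × R ≃+ G := AddEquiv.ofBijective Φ ⟨hΦinj, hΦsurj⟩
  exact ⟨{ e.toIntLinearEquiv with
    continuous_toFun := hΦ
    continuous_invFun := (Continuous.homeoOfEquivCompactToT2 (f := e.toEquiv) hΦ).symm.continuous }⟩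

variable [TotallyDisconnectedSpace G]

theorem exists_continuous_injective_addMonoidHom_finiteIndex_range
    [Countable {H : AddSubgroup G // IsClosed (H : Set G)}] :
    ∃ S : Set Nat.Primes, S.Finite ∧ ∃ f : (∀ q : S, ℤ_[q.1]) →+ G,
      Continuous f ∧ Function.Injective f ∧ f.range.FiniteIndex := by
  obtain ⟨g, hg⟩ := exists_isOpen_topologicalClosure_zmultiples (G := G)
  obtain ⟨φ, hφ, rfl⟩ := exists_continuous_addMonoidHom_map_one_eq g
  have hrange : IsOpen (φ.range : Set G) :=
    AddSubgroup.isOpen_mono (AddSubgroup.topologicalClosure_minimal _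
      (AddSubgroup.zmultiples_le_of_mem ⟨1, rfl⟩) (isCompact_range hφ).isClosed) hg
  have hfin := finite_setOf_map_single_one_ne_zero (ι := Nat.Primes) Nat.Primes.coe_nat_injective hφ
  have hopen := isOpen_range_extendByZero_sup (ι := Nat.Primes) Nat.Primes.coe_nat_injective
    (K := φ.ker) (isClosed_singleton.preimage hφ) hfin
  set S : Set Nat.Primes := {q | ∀ c ∈ φ.ker, c q = 0}
  let ε := extendByZero (fun q : Nat.Primes => ℤ_[q]) S
  refine ⟨S, hfin.subset fun q hq h => ?_, φ.comp ε, hφ.comp continuous_extendByZero,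
    (injective_iff_map_eq_zero _).2 fun c hc => ?_, ⟨?_⟩⟩
  · simpa using hq _ h
  · ext q
    rw [← extendByZero_apply_coe (fun q : Nat.Primes => ℤ_[q]) c, q.2 _ hc]
    rfl
  · have := AddSubgroup.quotient_finite_of_isOpen _ hopen
    have := AddSubgroup.quotient_finite_of_isOpen _ hrange
    rw [← AddMonoidHom.map_range, AddSubgroup.index_map]
    exact mul_ne_zero AddSubgroup.index_ne_zero_of_finite AddSubgroup.index_ne_zero_of_finite

theorem exists_continuous_nsmul_eq_map_mul {S : Set Nat.Primes} {f : (∀ q : S, ℤ_[q.1]) →+ G}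
    (hf : Continuous f) {n : ℕ} {x : G} {d : ∀ q : S, ℤ_[q.1]} (hx : n • x = f d) :
    ∃ ψ : (∀ q : S, ℤ_[q.1]) →+ G, Continuous ψ ∧ ∀ c, n • ψ c = f (d * c) := by
  obtain ⟨χ, hχ, hχ1⟩ := exists_continuous_addMonoidHom_map_one_eq x
  let ρ : ProfiniteInt →+* ∀ q : S, ℤ_[q.1] :=
    RingHom.pi fun q => Pi.evalRingHom (fun q : Nat.Primes => ℤ_[q]) q
  have hρ : Continuous ρ := continuous_pi fun q => continuous_apply q.1
  have hext : (nsmulAddMonoidHom n).comp χ = (f.comp (AddMonoidHom.mulLeft d)).comp ρ :=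
    addMonoidHom_ext_of_map_one_eq (ι := Nat.Primes) Nat.Primes.coe_nat_injective
      ((continuous_nsmul n).comp hχ) ((hf.comp (continuous_const_mul d)).comp hρ)
      (by simp [hχ1, hx])
  let ε := extendByZero (fun q : Nat.Primes => ℤ_[q]) S
  refine ⟨χ.comp ε, hχ.comp continuous_extendByZero, fun c => ?_⟩
  have hρε : ρ (ε c) = c := funext (extendByZero_apply_coe (fun q : Nat.Primes => ℤ_[q]) c)
  simpa [hρε] using DFunLike.congr_fun hext (ε c)

theorem exists_finite_prod_continuousLinearEquiv {S : Set Nat.Primes} (hS : S.Finite)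
    {f : (∀ q : S, ℤ_[q.1]) →+ G} (hf : Continuous f) (hinj : Function.Injective f)
    [f.range.FiniteIndex] :
    ∃ B : AddSubgroup G, Finite B ∧ Nonempty ((B × ∀ q : S, ℤ_[q.1]) ≃L[ℤ] G) := by
  have := hS.to_subtype
  set n := f.range.index
  have hn : n ≠ 0 := AddSubgroup.FiniteIndex.index_ne_zero
  have hp : Function.Injective fun q : S => (q.1 : ℕ) :=
    Nat.Primes.coe_nat_injective.comp Subtype.val_injective
  have hclosed : IsClosed ((nsmulAddMonoidHom n : G →+ G).range : Set G) :=
    (isCompact_range (continuous_nsmul n)).isClosed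
  obtain ⟨d, hd⟩ := exists_forall_mem_iff_dvd_of_isClosed hp
    (K := (nsmulAddMonoidHom n : G →+ G).range.comap f) (hclosed.preimage hf)
  obtain ⟨x, hx⟩ : ∃ x : G, n • x = f d := (hd d).2 dvd_rfl
  obtain ⟨ψ, hψ, hψn⟩ := exists_continuous_nsmul_eq_map_mul hf hx
  have hdn : d ∣ n := (hd n).1 ⟨f 1, by simp [← map_nsmul]⟩
  have hdreg (q) : d q ≠ 0 := by
    intro h0
    obtain ⟨c, hc⟩ := hdn
    simpa [h0, hn] using congrFun hc q
  refine ⟨(nsmulAddMonoidHom n).ker, finite_ker_nsmul_of_finiteIndex_range hinj hn,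
    nonempty_ker_prod_continuousLinearEquiv (continuous_nsmul n) hψ ?_ ?_⟩
  · refine fun a b hab => funext fun q => mul_left_cancel₀ (hdreg q) ?_
    have hfab : f (d * a) = f (d * b) := by rw [← hψn, ← hψn]; exact hab
    exact congrFun (hinj hfab) q
  · rintro _ ⟨y, rfl⟩
    obtain ⟨c, hc⟩ : n • y ∈ f.range := AddSubgroup.nsmul_index_mem _ y
    obtain ⟨b, rfl⟩ := (hd c).1 ⟨y, hc.symm⟩
    exact ⟨b, (hψn b).trans hc⟩

theorem exists_fin_pi_padicInt_continuousLinearEquiv {S : Set Nat.Primes} (hS : S.Finite) :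
    ∃ (r : ℕ) (p : Fin r → Nat.Primes), Function.Injective p ∧
      Nonempty ((∀ q : S, ℤ_[q.1]) ≃L[ℤ] ∀ i, ℤ_[p i]) := by
  have := hS.to_subtype
  obtain ⟨r, ⟨σ⟩⟩ := Finite.exists_equiv_fin S
  exact ⟨r, fun i => σ.symm i, Subtype.val_injective.comp σ.symm.injective,
    ⟨(ContinuousLinearEquiv.piCongrLeft ℤ (fun q : S => ℤ_[q.1]) σ.symm).symm⟩⟩

theorem exists_finiteAddCommGroup_continuousLinearEquiv (B : Type*) [AddCommGroup B] [Finite B]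
    [TopologicalSpace B] [DiscreteTopology B] :
    ∃ A : FiniteAddCommGroup, Nonempty (A.carrier ≃L[ℤ] B) := by
  obtain ⟨A, ⟨α⟩⟩ : ∃ A : FiniteAddCommGroup, Nonempty (A.carrier ≃+ B) :=
    ⟨⟨Shrink.{0} B⟩, ⟨Shrink.addEquiv⟩⟩
  exact ⟨A, ⟨{ α.toIntLinearEquiv with
    continuous_toFun := continuous_of_discreteTopology
    continuous_invFun := continuous_of_discreteTopology }⟩⟩

end Structure

section IntegralPoints

theorem mem_closure_intCast_image_setOf_dvd_sub {p : ℕ} [Fact p.Prime] {n : ℕ} (hn : n ≠ 0)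
    (y : ℤ_[p]) : y ∈ closure (Int.cast '' {z : ℤ | y * n ∣ z - y}) := by
  rcases eq_or_ne y 0 with rfl | hy
  · exact subset_closure ⟨0, by simp⟩
  have hopen : IsOpen {x : ℤ_[p] | y * n ∣ x - y} :=
    (isOpen_setOf_padicInt_dvd (mul_ne_zero hy (Nat.cast_ne_zero.2 hn))).preimage
      (continuous_id.sub continuous_const)
  refine closure_mono ?_ (PadicInt.denseRange_intCast.open_subset_closure_inter hopen
    (show y * n ∣ y - y by simp))
  rintro _ ⟨hz, z, rfl⟩
  exact ⟨z, hz, rfl⟩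

variable {ι : Type*} {p : ι → ℕ} [∀ i, Fact (p i).Prime] {A : Type*} [AddCommGroup A] [Finite A]
  [TopologicalSpace A]

theorem subset_closure_inter_setOf_intCast (hp : Function.Injective p)
    {H : AddSubgroup (A × ∀ i, ℤ_[p i])} (hH : IsClosed (H : Set (A × ∀ i, ℤ_[p i]))) :
    (H : Set (A × ∀ i, ℤ_[p i])) ⊆
      closure (H ∩ {x | ∃ z : ι → ℤ, x.2 = fun i => (z i : ℤ_[p i])}) := by
  rintro ⟨a, y⟩ hay
  have hmul (c : ∀ i, ℤ_[p i]) : ((0 : A), c * Nat.card A • y) ∈ H := by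
    refine map_mem_of_isClosed_of_map_one_mem hp hH
      (φ := (AddMonoidHom.inr A _).comp (AddMonoidHom.mulRight (Nat.card A • y)))
      (continuous_const.prodMk (continuous_mul_const _)) ?_ c
    simpa [card_nsmul_eq_zero'] using nsmul_mem hay (Nat.card A)
  let Z (i : ι) : Set ℤ_[p i] := Int.cast '' {z : ℤ | y i * Nat.card A ∣ z - y i}
  have hclosure : (a, y) ∈ closure ({a} ×ˢ Set.univ.pi Z) := by
    rw [closure_prod_eq, closure_pi_set]
    exact ⟨subset_closure rfl, fun i _ =>
      mem_closure_intCast_image_setOf_dvd_sub Nat.card_pos.ne' (y i)⟩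
  refine closure_mono ?_ hclosure
  rintro ⟨b, x⟩ ⟨rfl, hx⟩
  choose z hz hzx using fun i => hx i trivial
  choose t ht using hz
  obtain rfl : (fun i => (z i : ℤ_[p i])) = x := funext hzx
  refine ⟨?_, z, rfl⟩
  have hz : (fun i => (z i : ℤ_[p i])) = y + t * Nat.card A • y := by
    ext1 i
    simp only [Pi.add_apply, Pi.mul_apply, nsmul_eq_mul]
    linear_combination ht i
  simpa [hz] using add_mem hay (hmul t)

theorem countable_submodule {R M : Type*} [Semiring R] [AddCommMonoid M] [Module R M] [Countable M]
    [IsNoetherian R M] : Countable (Submodule R M) :=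
  Function.Surjective.countable (f := fun s : Finset M => Submodule.span R (s : Set M))
    IsNoetherian.noetherian

theorem countable_isClosed_addSubgroup_prod_pi_padicInt [Finite ι] (hp : Function.Injective p) :
    Countable {H : AddSubgroup (A × ∀ i, ℤ_[p i]) // IsClosed (H : Set (A × ∀ i, ℤ_[p i]))} := by
  let f : A × (ι → ℤ) →+ A × ∀ i, ℤ_[p i] := (AddMonoidHom.id A).prodMap <|
    AddMonoidHom.pi fun i => (Int.castAddHom ℤ_[p i]).comp (Pi.evalAddMonoidHom _ i)
  have hle {H K : AddSubgroup (A × ∀ i, ℤ_[p i])} (hH : IsClosed (H : Set (A × ∀ i, ℤ_[p i])))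
      (hK : IsClosed (K : Set (A × ∀ i, ℤ_[p i]))) (h : H.comap f = K.comap f) : H ≤ K := by
    refine (subset_closure_inter_setOf_intCast hp hH).trans (closure_minimal ?_ hK)
    rintro ⟨a, _⟩ ⟨hx, z, rfl⟩
    exact (h.le : H.comap f ≤ K.comap f) (x := (a, z)) hx
  have hcount : Countable (Submodule ℤ (A × (ι → ℤ))) := countable_submodule
  refine Function.Injective.countable (β := Submodule ℤ (A × (ι → ℤ)))
    (f := fun H => AddSubgroup.toIntSubmodule (H.1.comap f)) fun H K h => Subtype.ext ?_
  have hcomap := AddSubgroup.toIntSubmodule.injective h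
  exact le_antisymm (hle H.2 K.2 hcomap) (hle K.2 H.2 hcomap.symm)

end IntegralPoints

theorem countable_isClosed_addSubgroup_of_surjective {G H : Type*} [AddGroup G]
    [TopologicalSpace G] [AddGroup H] [TopologicalSpace H] {f : H →+ G}
    (hf : Continuous f) (hsurj : Function.Surjective f)
    [Countable {K : AddSubgroup H // IsClosed (K : Set H)}] :
    Countable {K : AddSubgroup G // IsClosed (K : Set G)} :=
  Function.Injective.countable
    (β := {K : AddSubgroup H // IsClosed (K : Set H)})
    (f := fun K => ⟨K.1.comap f, K.2.preimage hf⟩)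
    fun _ _ h => Subtype.ext (AddSubgroup.comap_injective hsurj (congrArg Subtype.val h))

/-- Let `G` be an abelian profinite group (written additively).  Then the set
of closed subgroups of `G` is countable if and only if `G` is topologically isomorphic to
`A × ℤ_{p₁} × ⋯ × ℤ_{p_r}` for some `r ≥ 0`, pairwise distinct primes `p₁, …, p_r`, and some
finite abelian group `A`. -/
theorem countable_closedSubgroups_iff_abelian
    {G : Type*} [AddCommGroup G] [TopologicalSpace G] [IsTopologicalAddGroup G]
    [CompactSpace G] [T2Space G] [TotallyDisconnectedSpace G] :
    Countable {H : AddSubgroup G // IsClosed (H : Set G)} ↔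
      ∃ (r : ℕ) (ps : Fin r → ℕ) (hps : ∀ i, (ps i).Prime),
        Function.Injective ps ∧
        ∃ (A : FiniteAddCommGroup)
          (e : G ≃+ (A.carrier × ((i : Fin r) → @PadicInt (ps i) ⟨hps i⟩))),
          Continuous e ∧ Continuous e.symm := by
  constructor
  · intro
    obtain ⟨S, hS, f, hf, hinj, _⟩ :=
      exists_continuous_injective_addMonoidHom_finiteIndex_range (G := G)
    obtain ⟨B, _, ⟨e⟩⟩ := exists_finite_prod_continuousLinearEquiv hS hf hinj
    obtain ⟨A, ⟨α⟩⟩ := exists_finiteAddCommGroup_continuousLinearEquiv B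
    obtain ⟨r, p, hp, ⟨ρ⟩⟩ := exists_fin_pi_padicInt_continuousLinearEquiv hS
    let E := e.symm.trans (α.symm.prodCongr ρ)
    exact ⟨r, fun i => p i, fun i => (p i).2, Nat.Primes.coe_nat_injective.comp hp, A,
      E.toLinearEquiv.toAddEquiv, E.continuous, E.symm.continuous⟩
  · rintro ⟨r, p, hp, hinj, A, e, -, he⟩
    have (i : Fin r) : Fact (p i).Prime := ⟨hp i⟩
    have := countable_isClosed_addSubgroup_prod_pi_padicInt hinj (A := A.carrier)
    exact countable_isClosed_addSubgroup_of_surjective (f := e.symm.toAddMonoidHom) he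
      e.symm.surjective
end

section
/- Let G be a profinite group and H a closed subgroup of G. Suppose there exists an open normal subgroup N of G such that every closed subgroup K of G satisfying NK = NH is conjugate to H in G. Then H is an open subgroup of G. (The hypothesis says exactly that the conjugacy class of H is an isolated point of the space Sub(G)/G of conjugacy classes of closed subgroups, since the sets {conjugacy classes of K : NK = NH}, for N ranging over open normal subgroups of G, form a neighbourhood basis of the class of H.) -/
/-!
The open subgroup `NH` is itself closed and satisfies `N(NH) = NH`, so isolation makes `H`
conjugate to `NH`. Conjugation is a homeomorphism, hence `H` is open.
-/

section SeparatelyContinuousMul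

variable {G : Type*} [Group G] [TopologicalSpace G] [SeparatelyContinuousMul G]

theorem isOpen_map_conj_iff (g : G) (H : Subgroup G) :
    IsOpen (H.map (MulAut.conj g).toMonoidHom : Set G) ↔ IsOpen (H : Set G) :=
  (Homeomorph.smul (ConjAct.toConjAct g)).isOpen_image

theorem isOpen_of_isolated_conjugacyClass_general (H : Subgroup G)
    (hiso : ∃ N : Subgroup G, IsOpen (N : Set G) ∧
      ∀ K : Subgroup G, IsClosed (K : Set G) → N ⊔ K = N ⊔ H →
        ∃ g : G, Subgroup.map (MulAut.conj g).toMonoidHom H = K) :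
    IsOpen (H : Set G) := by
  obtain ⟨N, hN, hconj⟩ := hiso
  have hNH : IsOpen ((N ⊔ H : Subgroup G) : Set G) := Subgroup.isOpen_mono le_sup_left hN
  obtain ⟨g, hg⟩ := hconj (N ⊔ H) (Subgroup.isClosed_of_isOpen _ hNH) (sup_left_idem N H)
  rw [← isOpen_map_conj_iff g, hg]
  exact hNH

end SeparatelyContinuousMul

/-- Let `G` be a profinite group and `H` a closed subgroup.  If there is an
open normal subgroup `N` of `G` such that every closed subgroup `K` with `NK = NH` is
conjugate to `H` in `G` (i.e. the conjugacy class of `H` is an isolated point of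
`Sub(G)/G`), then `H` is open in `G`. -/
theorem isOpen_of_isolated_conjugacyClass
    {G : Type*} [Group G] [TopologicalSpace G] [IsTopologicalGroup G]
    [CompactSpace G] [T2Space G] [TotallyDisconnectedSpace G]
    (H : Subgroup G) (hH : IsClosed (H : Set G))
    (hiso : ∃ N : Subgroup G, IsOpen (N : Set G) ∧ N.Normal ∧
      ∀ K : Subgroup G, IsClosed (K : Set G) → N ⊔ K = N ⊔ H →
        ∃ g : G, Subgroup.map (MulAut.conj g).toMonoidHom H = K) :
    IsOpen (H : Set G) := by
  obtain ⟨N, hN, -, hconj⟩ := hiso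
  exact isOpen_of_isolated_conjugacyClass_general H ⟨N, hN, hconj⟩
end

section
/- Let X be a profinite topological space (compact, Hausdorff, and totally disconnected) and let f : E → F be a morphism of sheaves of abelian groups on X. If the induced map on stalks f_x : E_x → F_x is surjective for every point x ∈ X, then for every compact open subset Y ⊆ X the induced map on sections f(Y) : E(Y) → F(Y) is surjective. -/
open CategoryTheory TopologicalSpace Opposite

/-!
Near each point of `Y`, surjectivity on stalks lets a section `t` over `Y` be lifted. Since `Y` is
profinite, the open cover by the domains of these local lifts refines to a partition of `Y` into
open subsets. Lifts on disjoint open sets are automatically compatible, because a sheaf has only one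
section over the empty set, so they glue to a lift of `t`.
-/

open scoped Function

universe v u

lemma exists_finite_disjoint_open_refinement {X : Type*} [TopologicalSpace X] (Y : Opens X)
    [CompactSpace Y] [T2Space Y] [TotallyDisconnectedSpace Y] {ι : Type*} (V : ι → Opens X)
    (hV : Y ≤ iSup V) :
    ∃ (n : ℕ) (W : Fin n → Opens X),
      iSup W = Y ∧ (∀ j, ∃ i, W j ≤ V i) ∧ Pairwise (Disjoint on W) := by
  have hcover : IsOpenCover fun i ↦ (V i).comap ⟨((↑) : Y → X), continuous_subtype_val⟩ := by
    refine IsOpenCover.mk (eq_top_iff.mpr fun y _ ↦ ?_)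
    obtain ⟨i, hi⟩ := Opens.mem_iSup.mp (hV y.2)
    exact Opens.mem_iSup.mpr ⟨i, hi⟩
  obtain ⟨n, W, hWV, hWcover, hWdisj⟩ := hcover.exists_finite_nonempty_disjoint_clopen_cover
  refine ⟨n, fun j ↦ ⟨(↑) '' (W j : Set Y), Y.2.isOpenMap_subtype_val _ (W j).isOpen⟩,
    le_antisymm (iSup_le fun j ↦ ?_) fun y hy ↦ ?_, fun j ↦ ?_, fun i j hij ↦ ?_⟩
  · exact Subtype.coe_image_subset _ _
  · obtain ⟨j, hj⟩ := Set.mem_iUnion.mp (hWcover (Set.mem_univ ⟨y, hy⟩))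
    exact Opens.mem_iSup.mpr ⟨j, _, hj, rfl⟩
  · exact (hWV j).2.imp fun i hi ↦ Set.image_subset_iff.mpr hi
  · have hdisj : Disjoint (W i : Set Y) (W j) := Clopens.coe_disjoint.mpr (hWdisj hij)
    exact Opens.coe_disjoint.mp ((Set.disjoint_image_iff Subtype.val_injective).mpr hdisj)

section Sheaf

open Limits

variable {C : Type u} [Category.{v} C] {FC : C → C → Type*} {CC : C → Type v}
  [∀ A B, FunLike (FC A B) (CC A) (CC B)] [ConcreteCategory C FC] {X : TopCat.{v}}

lemma exists_mem_imageSieve_of_stalk_surjective [HasColimits C]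
    [PreservesFilteredColimits (forget C)] {E F : X.Presheaf C} (f : E ⟶ F) {x : X}
    (hf : Function.Surjective ((TopCat.Presheaf.stalkFunctor C x).map f))
    {Y : Opens X} (hx : x ∈ Y) (t : ToType (F.obj (op Y))) :
    ∃ (V : Opens X) (i : V ⟶ Y), Presheaf.imageSieve f t i ∧ x ∈ V := by
  obtain ⟨e, he⟩ := hf (F.germ Y x hx t)
  obtain ⟨U, hxU, s, rfl⟩ := E.exists_germ_eq e
  rw [TopCat.Presheaf.stalkFunctor_map_germ_apply] at he
  obtain ⟨V, hxV, iU, iY, hV⟩ := F.germ_eq x hxU hx _ t he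
  exact ⟨V, iY, ⟨E.map iU.op s, by rw [NatTrans.naturality_apply, hV]⟩, hxV⟩

variable [HasLimits C] [PreservesLimits (forget C)] [(forget C).ReflectsIsomorphisms]

lemma subsingleton_sections_of_eq_bot (E : TopCat.Sheaf C X) {U : Opens X} (hU : U = ⊥) :
    Subsingleton (ToType (E.obj.obj (op U))) where
  allEq s t := E.eq_of_locally_eq' (fun i : Empty ↦ i.elim) U (fun i ↦ i.elim)
    (hU.trans_le bot_le) s t fun i ↦ i.elim

lemma isCompatible_of_pairwise_disjoint (E : TopCat.Sheaf C X) {ι : Type*} {W : ι → Opens X}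
    (hW : Pairwise (Disjoint on W)) (s : ∀ i, ToType (E.obj.obj (op (W i)))) :
    TopCat.Presheaf.IsCompatible E.obj W s := fun i j ↦ by
  obtain rfl | hij := eq_or_ne i j
  · rfl
  · exact (subsingleton_sections_of_eq_bot E (hW hij).eq_bot).elim _ _

lemma exists_app_eq_of_disjoint_cover {E F : TopCat.Sheaf C X} (f : E ⟶ F) {ι : Type*}
    {W : ι → Opens X} (hdisj : Pairwise (Disjoint on W))
    (t : ToType (F.obj.obj (op (iSup W))))
    (ht : ∀ i, Presheaf.imageSieve f.hom t (Opens.leSupr W i)) :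
    ∃ s, f.hom.app (op (iSup W)) s = t := by
  choose s hs using ht
  obtain ⟨g, hg, -⟩ := E.existsUnique_gluing W s (isCompatible_of_pairwise_disjoint E hdisj s)
  refine ⟨g, F.eq_of_locally_eq W _ _ fun i ↦ ?_⟩
  rw [← NatTrans.naturality_apply, hg, hs]

theorem surjective_sections_of_surjective_stalks_general [HasColimits C]
    [PreservesFilteredColimits (forget C)] {E F : TopCat.Sheaf C X} (f : E ⟶ F) (Y : Opens X)
    [CompactSpace Y] [T2Space Y] [TotallyDisconnectedSpace Y]
    (hstalk : ∀ x ∈ Y, Function.Surjective ((TopCat.Presheaf.stalkFunctor C x).map f.hom)) :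
    Function.Surjective (f.hom.app (op Y)) := by
  intro t
  choose V i hlift hmem using fun y : Y ↦
    exists_mem_imageSieve_of_stalk_surjective f.hom (hstalk y y.2) y.2 t
  obtain ⟨n, W, rfl, hWV, hdisj⟩ := exists_finite_disjoint_open_refinement Y V
    fun y hy ↦ Opens.mem_iSup.mpr ⟨⟨y, hy⟩, hmem ⟨y, hy⟩⟩
  refine exists_app_eq_of_disjoint_cover f hdisj t fun j ↦ ?_
  obtain ⟨y, hy⟩ := hWV j
  exact (Presheaf.imageSieve f.hom t).downward_closed (hlift y) (homOfLE hy)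

end Sheaf

/-- Let `X` be a profinite space (compact, Hausdorff, totally disconnected)
and `f : E ⟶ F` a morphism of sheaves of abelian groups on `X`.  If the induced map on stalks
`E_x → F_x` is surjective for every `x ∈ X`, then for every compact open subset `Y ⊆ X` the
map on sections `E(Y) → F(Y)` is surjective. -/
theorem surjective_sections_of_surjective_stalks
    {X : TopCat} [CompactSpace X] [T2Space X] [TotallyDisconnectedSpace X]
    (E F : TopCat.Sheaf AddCommGrpCat X) (f : E ⟶ F)
    (hstalk : ∀ x : X,
      Function.Surjective ((TopCat.Presheaf.stalkFunctor AddCommGrpCat x).map f.hom))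
    (Y : Opens X) (hY : IsCompact (Y : Set X)) :
    Function.Surjective (f.hom.app (op Y)) := by
  have : CompactSpace Y := isCompact_iff_compactSpace.mp hY
  exact surjective_sections_of_surjective_stalks_general f Y fun x _ ↦ hstalk x
end
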